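/- (Beltrán–Felipe) Let m and n be coprime integers with m > 1 and n > 1, and let G be a finite group whose set of conjugacy class sizes is N(G) = {1, m, n, mn}. Then G is nilpotent, and m and n are powers of two distinct primes. -/

import Mathlib

/-- The index of an element `x` of a group `G`: the size of its conjugacy class,
`|x^G| = |G : C_G(x)|`. -/
noncomputable def classSize {G : Type*} [Group G] (x : G) : ℕ :=
  (Subgroup.centralizer {x}).index

/-- The `p`-index of `x`: the `p`-part of `|x^G|`. -/
noncomputable def pIndex (p : ℕ) {G : Type*} [Group G] (x : G) : ℕ :=
  p ^ ((classSize x).factorization p)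

/-- `G` is `p`-index extremal (`G ∈ R(p)`): the set `N(G)_p` of `p`-indices of elements of `G`
contains exactly one nontrivial element. -/
def IsPIndexExtremal (p : ℕ) (G : Type*) [Group G] : Prop :=
  ∃! a : ℕ, a ≠ 1 ∧ ∃ x : G, pIndex p x = a

/-- `x` is a `p`-element: its order is a power of `p`. -/
def IsPElement (p : ℕ) {G : Type*} [Group G] (x : G) : Prop :=
  ∃ k : ℕ, orderOf x = p ^ k

/-!
Let `x` be a `p`-element of class size `m` with `p ∣ m`. If `a ∈ C(x)` has order prime to `p`, then
`x * a` has class size `m` or `m * n`, so `C(x) ∩ C(a)` has index `1` or `n` in `C(x)`, which is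
prime to `p`. Therefore the `p`-elements of `C(x)` commute with its elements of order prime to `p`.

If such an `x` commutes with a `q`-element `y` of class size `n`, `q ∣ n`, then the noncentral
elements of the centralizer of the `p`-elements of `C(x)` all have class size `n` there, so `n` is a
power of `q` by Itô; by symmetry `m` is a power of `p`. The normal closure of `y` is then
a `q`-group, and its normalizer condition makes it commute with the `p`-elements of `C(y)`. Hence
all `p`-elements of `G` lie in `C(y)` and form a subgroup, and likewise for `q`.

If there is no such pair, class size `m` is attained only by `r`-elements with `r ∣ n`, among the
elements of prime power order. Then `m` is a power of a prime `p` and `n` of a prime `r`, noncentral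
`p`-elements have class size `n` and noncentral `r`-elements class size `m`, so that a `p`-element
commuting with an `r`-element commutes with all its conjugates. Choose a noncentral element `e` of
prime power order, say a `p`-element, with normal closure minimal modulo the center. A noncentral
`p`-element commuting with `e` then commutes with every `r`-element of `C(e)`. Since every
`p`-element of class size `n` has a conjugate in `C(e)`, a noncentral `r`-element of `C(e)` commutes
with all of them, which is impossible.
-/

open Subgroup

section Centralizer

variable {G : Type*} [Group G] {a b g k x : G}

lemma mem_centralizer_singleton_iff_commute : k ∈ centralizer {g} ↔ Commute k g :=
  mem_centralizer_singleton_iff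

lemma mem_centralizer_singleton_comm : k ∈ centralizer {g} ↔ g ∈ centralizer {k} := by
  simp only [mem_centralizer_singleton_iff_commute, Commute.symm_iff]

lemma centralizer_singleton_eq_top_iff : centralizer {g} = ⊤ ↔ g ∈ center G := by
  rw [centralizer_eq_top_iff_subset, Set.singleton_subset_iff, SetLike.mem_coe]

lemma conj_eq_self_iff_commute : k * g * k⁻¹ = g ↔ Commute k g :=
  mul_inv_eq_iff_eq_mul

lemma commute_conj_left_iff : Commute (k * g * k⁻¹) x ↔ Commute g (k⁻¹ * x * k) := by
  rw [← Commute.conj_iff k⁻¹]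
  simp only [mul_assoc, inv_inv, inv_mul_cancel_left, inv_mul_cancel, mul_one]

lemma centralizer_singleton_conj (g k : G) :
    centralizer {k * g * k⁻¹} = (centralizer {g}).map (MulAut.conj k).toMonoidHom := by
  ext x
  rw [mem_map_equiv, mem_centralizer_singleton_iff_commute, mem_centralizer_singleton_iff_commute,
    Commute.symm_iff, commute_conj_left_iff, Commute.symm_iff, MulAut.conj_symm_apply]

lemma conj_mem_center_iff : k * g * k⁻¹ ∈ center G ↔ g ∈ center G :=
  ⟨fun h ↦ by simpa [mul_assoc] using (inferInstance : (center G).Normal).conj_mem _ h k⁻¹,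
    fun h ↦ (inferInstance : (center G).Normal).conj_mem _ h k⟩

lemma centralizer_singleton_le_of_mem_zpowers (h : a ∈ zpowers g) :
    centralizer {g} ≤ centralizer {a} := by
  obtain ⟨i, rfl⟩ := mem_zpowers_iff.1 h
  intro c hc
  rw [mem_centralizer_singleton_iff_commute] at hc ⊢
  exact hc.zpow_right i

lemma left_mem_zpowers_mul (h : Commute a b) (hc : (orderOf a).Coprime (orderOf b)) :
    a ∈ zpowers (a * b) := by
  obtain ⟨i, hi_one, hi_zero⟩ := Nat.chineseRemainder hc 1 0
  refine mem_zpowers_iff.2 ⟨i, ?_⟩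
  rw [zpow_natCast, h.mul_pow, pow_eq_pow_iff_modEq.2 hi_one, pow_eq_pow_iff_modEq.2 hi_zero,
    pow_one, pow_zero, mul_one]

lemma centralizer_singleton_mul (h : Commute a b) (hc : (orderOf a).Coprime (orderOf b)) :
    centralizer {a * b} = centralizer {a} ⊓ centralizer {b} := by
  refine le_antisymm (le_inf ?_ ?_) fun c ⟨hca, hcb⟩ ↦ ?_
  · exact centralizer_singleton_le_of_mem_zpowers (left_mem_zpowers_mul h hc)
  · rw [h.eq]
    exact centralizer_singleton_le_of_mem_zpowers (left_mem_zpowers_mul h.symm hc.symm)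
  · exact mem_centralizer_singleton_iff_commute.2 (Commute.mul_right
      (mem_centralizer_singleton_iff_commute.1 hca) (mem_centralizer_singleton_iff_commute.1 hcb))

end Centralizer

section ClassSize

variable {G : Type*} [Group G] {a b g k x : G}

lemma classSize_eq_one_iff : classSize g = 1 ↔ g ∈ center G := by
  rw [classSize, index_eq_one, centralizer_singleton_eq_top_iff]

lemma classSize_pos [Finite G] (g : G) : 0 < classSize g :=
  Nat.pos_of_ne_zero FiniteIndex.index_ne_zero

lemma classSize_conj (g k : G) : classSize (k * g * k⁻¹) = classSize g := by
  rw [classSize, centralizer_singleton_conj]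
  exact index_map_of_bijective (MulAut.conj k).bijective _

lemma classSize_subgroup_coe {L : Subgroup G} (h : L) :
    classSize h = (centralizer {(h : G)}).relIndex L := by
  rw [classSize, relIndex]
  congr 1
  ext x
  rw [mem_subgroupOf, mem_centralizer_singleton_iff, mem_centralizer_singleton_iff]
  exact Subtype.ext_iff

lemma relIndex_centralizer_mul_classSize (hc : Commute x a)
    (ho : (orderOf x).Coprime (orderOf a)) :
    (centralizer {a}).relIndex (centralizer {x}) * classSize x = classSize (x * a) := by
  rw [classSize, classSize, centralizer_singleton_mul hc ho, ← inf_relIndex_left,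
    relIndex_mul_index inf_le_left]

end ClassSize

namespace IsPElement

variable {G : Type*} [Group G] {p q : ℕ} {a b : G}

lemma of_pow_eq_one (hp : p.Prime) {i : ℕ} (h : a ^ p ^ i = 1) : IsPElement p a := by
  obtain ⟨j, -, hj⟩ := (Nat.dvd_prime_pow hp).1 (orderOf_dvd_of_pow_eq_one h)
  exact ⟨j, hj⟩

lemma conj (ha : IsPElement p a) (k : G) : IsPElement p (k * a * k⁻¹) :=
  ha.imp fun _ hi ↦ (MulEquiv.orderOf_eq (MulAut.conj k) a).trans hi

lemma inv (ha : IsPElement p a) : IsPElement p a⁻¹ :=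
  ha.imp fun _ hi ↦ (orderOf_inv a).trans hi

lemma mul (hp : p.Prime) (ha : IsPElement p a) (hb : IsPElement p b) (hab : Commute a b) :
    IsPElement p (a * b) := by
  obtain ⟨i, hi⟩ := ha
  obtain ⟨j, hj⟩ := hb
  refine of_pow_eq_one hp (i := i + j) (orderOf_dvd_iff_pow_eq_one.1 ?_)
  rw [pow_add, ← hi, ← hj]
  exact hab.orderOf_mul_dvd_mul_orderOf

lemma of_mem_zpowers (hp : p.Prime) (ha : IsPElement p a) (hb : b ∈ zpowers a) :
    IsPElement p b := by
  obtain ⟨i, hi⟩ := ha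
  obtain ⟨j, -, hj⟩ := (Nat.dvd_prime_pow hp).1 (hi ▸ orderOf_dvd_of_mem_zpowers hb)
  exact ⟨j, hj⟩

lemma coprime_orderOf (hp : p.Prime) (hq : q.Prime) (hpq : p ≠ q) (hb : IsPElement q b) :
    p.Coprime (orderOf b) := by
  obtain ⟨j, hj⟩ := hb
  exact hj ▸ ((Nat.coprime_primes hp hq).2 hpq).pow_right j

lemma orderOf_coprime (ha : IsPElement p a) (hb : p.Coprime (orderOf b)) :
    (orderOf a).Coprime (orderOf b) := by
  obtain ⟨i, hi⟩ := ha
  exact hi ▸ hb.pow_left i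

lemma orderOf_coprime_orderOf (hp : p.Prime) (hq : q.Prime) (hpq : p ≠ q) (ha : IsPElement p a)
    (hb : IsPElement q b) : (orderOf a).Coprime (orderOf b) :=
  ha.orderOf_coprime (hb.coprime_orderOf hp hq hpq)

end IsPElement

section PrimaryParts

variable {G : Type*} [Group G] {p : ℕ}

lemma isPElement_subgroup_coe_iff {L : Subgroup G} {a : L} :
    IsPElement p (a : G) ↔ IsPElement p a := by
  simp only [IsPElement, Subgroup.orderOf_coe]

lemma isPGroup_iff_forall_mem_isPElement (hp : p.Prime) {P : Subgroup G} :
    IsPGroup p P ↔ ∀ x ∈ P, IsPElement p x := by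
  have := Fact.mk hp
  rw [IsPGroup.iff_orderOf, Subtype.forall]
  exact forall₂_congr fun x hx ↦ by rw [Subgroup.orderOf_mk]; rfl

lemma IsPElement.isPGroup_zpowers (hp : p.Prime) {a : G} (ha : IsPElement p a) :
    IsPGroup p (zpowers a) :=
  (isPGroup_iff_forall_mem_isPElement hp).2 fun _ ↦ ha.of_mem_zpowers hp

variable [Finite G]

lemma exists_isPElement_mul_eq (hp : p.Prime) (g : G) :
    ∃ a ∈ zpowers g, ∃ b ∈ zpowers g,
      IsPElement p a ∧ p.Coprime (orderOf b) ∧ Commute a b ∧ a * b = g := by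
  obtain ⟨k, c, hc, hg⟩ := Nat.exists_eq_pow_mul_and_not_dvd (orderOf_pos g).ne' p hp.ne_one
  have hpc : p.Coprime c := hp.coprime_iff_not_dvd.2 hc
  have hcop : (p ^ k).Coprime c := hpc.pow_left k
  obtain ⟨i, hi_one, hi_zero⟩ := Nat.chineseRemainder hcop 1 0
  obtain ⟨j, hj_zero, hj_one⟩ := Nat.chineseRemainder hcop 0 1
  refine ⟨g ^ i, pow_mem (mem_zpowers g) i, g ^ j, pow_mem (mem_zpowers g) j, ?_, ?_,
    Commute.pow_pow_self g i j, ?_⟩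
  · refine .of_pow_eq_one hp (i := k) ?_
    rw [← pow_mul, ← orderOf_dvd_iff_pow_eq_one, hg, mul_comm]
    exact mul_dvd_mul_right (Nat.modEq_zero_iff_dvd.1 hi_zero) _
  · refine hpc.of_dvd_right (orderOf_dvd_iff_pow_eq_one.2 ?_)
    rw [← pow_mul, ← orderOf_dvd_iff_pow_eq_one, hg]
    exact mul_dvd_mul_right (Nat.modEq_zero_iff_dvd.1 hj_zero) _
  · conv_rhs => rw [← pow_one g]
    rw [← pow_add, pow_eq_pow_iff_modEq, hg, ← Nat.modEq_and_modEq_iff_modEq_mul hcop]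
    exact ⟨hi_one.add hj_zero, by simpa using hi_zero.add hj_one⟩

lemma mem_of_forall_isPElement_mem_zpowers {H : Subgroup G} (g : G)
    (h : ∀ a ∈ zpowers g, ∀ p : ℕ, p.Prime → IsPElement p a → a ∈ H) : g ∈ H := by
  induction hN : orderOf g using Nat.strong_induction_on generalizing g with
  | _ N ih =>
  subst hN
  by_cases hg : orderOf g = 1
  · exact orderOf_eq_one_iff.1 hg ▸ one_mem H
  obtain ⟨p, hp, hpg⟩ := Nat.exists_prime_and_dvd hg
  obtain ⟨a, ha, b, hb, hpa, hpb, -, hab⟩ := exists_isPElement_mul_eq hp g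
  have hlt : orderOf b < orderOf g :=
    (Nat.le_of_dvd (orderOf_pos g) (orderOf_dvd_of_mem_zpowers hb)).lt_of_ne fun he ↦
      hp.coprime_iff_not_dvd.1 (he ▸ hpb) hpg
  exact hab ▸ mul_mem (h a ha p hp hpa)
    (ih _ hlt b (fun c hc ↦ h c (zpowers_le.2 hb hc)) rfl)

end PrimaryParts

section Conjugation

variable {G : Type*} [Group G] {p : ℕ}

lemma exists_forall_conj_mem_of_not_dvd_index (hp : p.Prime) {H P : Subgroup G}
    (hH : ¬ p ∣ H.index) (hP : IsPGroup p P) : ∃ k : G, ∀ x ∈ P, k * x * k⁻¹ ∈ H := by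
  have := Fact.mk hp
  obtain ⟨c, hc⟩ := hP.nonempty_fixed_point_of_prime_not_dvd_card (G ⧸ H) hH
  obtain ⟨k, rfl⟩ := QuotientGroup.mk_surjective c
  refine ⟨k⁻¹, fun x hx ↦ ?_⟩
  have hfix : ((x * k : G) : G ⧸ H) = k := hc ⟨x, hx⟩
  simpa [mul_assoc] using QuotientGroup.eq.1 hfix.symm

lemma exists_conj_mem_of_not_dvd_index (hp : p.Prime) {H : Subgroup G} (hH : ¬ p ∣ H.index)
    {x : G} (hx : IsPElement p x) : ∃ k : G, k * x * k⁻¹ ∈ H := by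
  obtain ⟨k, hk⟩ := exists_forall_conj_mem_of_not_dvd_index hp hH (hx.isPGroup_zpowers hp)
  exact ⟨k, hk x (mem_zpowers x)⟩

lemma exists_commute_conj_of_not_dvd_classSize (hp : p.Prime) {x z : G}
    (hz : ¬ p ∣ classSize z) (hx : IsPElement p x) : ∃ k : G, Commute x (k * z * k⁻¹) := by
  obtain ⟨k, hk⟩ := exists_conj_mem_of_not_dvd_index hp hz hx
  refine ⟨k⁻¹, ?_⟩
  rw [inv_inv]
  exact commute_conj_left_iff.1 (mem_centralizer_singleton_iff_commute.1 hk)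

lemma exists_forall_conj_mem_of_not_dvd_relIndex (hp : p.Prime) {H L P : Subgroup G}
    (hH : ¬ p ∣ H.relIndex L) (hP : IsPGroup p P) (hPL : P ≤ L) :
    ∃ k ∈ L, ∀ x ∈ P, k * x * k⁻¹ ∈ H := by
  obtain ⟨k, hk⟩ := exists_forall_conj_mem_of_not_dvd_index hp (H := H.subgroupOf L) hH
    (hP.comap_subtype (K := L))
  exact ⟨k, k.2, fun x hx ↦ hk ⟨x, hPL hx⟩ hx⟩

lemma exists_conj_mem_of_not_dvd_relIndex (hp : p.Prime) {H L : Subgroup G}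
    (hH : ¬ p ∣ H.relIndex L) {x : G} (hx : IsPElement p x) (hxL : x ∈ L) :
    ∃ k ∈ L, k * x * k⁻¹ ∈ H := by
  obtain ⟨k, hkL, hk⟩ := exists_forall_conj_mem_of_not_dvd_relIndex hp hH
    (hx.isPGroup_zpowers hp) (zpowers_le.2 hxL)
  exact ⟨k, hkL, hk x (mem_zpowers x)⟩

variable [Finite G]

/- By Burnside's orbit count an element of `G` has one fixed point on average, and the identity
fixes everything. -/
lemma subsingleton_of_forall_fixedBy_nonempty {α : Type*} [Finite α] [MulAction G α]
    [MulAction.IsPretransitive G α] (h : ∀ g : G, (MulAction.fixedBy α g).Nonempty) :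
    Subsingleton α := by
  classical
  have := Fintype.ofFinite G
  have := Fintype.ofFinite α
  have := Fintype.ofFinite (Quotient (MulAction.orbitRel G α))
  have one_le_fixed (g : G) : 1 ≤ Fintype.card (MulAction.fixedBy α g) :=
    Fintype.card_pos_iff.2 (h g).to_subtype
  have one_orbit : Fintype.card (Quotient (MulAction.orbitRel G α)) = 1 :=
    le_antisymm (Fintype.card_le_one_iff_subsingleton.2
      ((MulAction.pretransitive_iff_subsingleton_quotient G α).1 inferInstance))
      (Fintype.card_pos_iff.2 ⟨⟦(h 1).some⟧⟩)
  have fixed_eq_one : 1 = Fintype.card (MulAction.fixedBy α (1 : G)) := by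
    refine (Finset.sum_eq_sum_iff_of_le fun g _ ↦ one_le_fixed g).1 ?_ 1 (Finset.mem_univ _)
    rw [MulAction.sum_card_fixedBy_eq_card_orbits_mul_card_group G α, one_orbit]
    simp
  rw [← Fintype.card_le_one_iff_subsingleton, fixed_eq_one,
    Fintype.card_congr (Equiv.subtypeUnivEquiv (p := (· ∈ MulAction.fixedBy α (1 : G)))
      fun x ↦ by simp)]

lemma eq_top_of_forall_exists_conj_mem {H : Subgroup G}
    (h : ∀ g : G, ∃ k : G, k * g * k⁻¹ ∈ H) : H = ⊤ := by
  have : Subsingleton (G ⧸ H) := by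
    refine subsingleton_of_forall_fixedBy_nonempty (G := G) fun g ↦ ?_
    obtain ⟨k, hk⟩ := h g
    refine ⟨((k⁻¹ : G) : G ⧸ H), ?_⟩
    rw [MulAction.mem_fixedBy, MulAction.Quotient.smul_coe, eq_comm, QuotientGroup.eq, inv_inv]
    simpa [mul_assoc] using hk
  exact QuotientGroup.subgroup_eq_top_of_subsingleton H this

lemma le_of_forall_exists_conj_mem {H L : Subgroup G}
    (h : ∀ g ∈ L, ∃ k ∈ L, k * g * k⁻¹ ∈ H) : L ≤ H := by
  refine subgroupOf_eq_top.1 (eq_top_of_forall_exists_conj_mem fun g ↦ ?_)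
  obtain ⟨k, hkL, hk⟩ := h g g.2
  exact ⟨⟨k, hkL⟩, mem_subgroupOf.2 hk⟩

lemma le_centralizer_of_forall_exists_conj_commute {L : Subgroup G} {z : G}
    (h : ∀ g ∈ L, ∃ k ∈ L, Commute (k * z * k⁻¹) g) : L ≤ centralizer {z} := by
  refine le_of_forall_exists_conj_mem fun g hg ↦ ?_
  obtain ⟨k, hk, hkg⟩ := h g hg
  refine ⟨k⁻¹, inv_mem hk, mem_centralizer_singleton_iff_commute.2 ?_⟩
  rw [inv_inv]
  exact (commute_conj_left_iff.1 hkg).symm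

lemma exists_isPGroup_not_dvd_relIndex (hp : p.Prime) (L : Subgroup G) :
    ∃ S ≤ L, IsPGroup p S ∧ ¬ p ∣ S.relIndex L := by
  have := Fact.mk hp
  let P : Sylow p L := default
  refine ⟨(P : Subgroup L).map L.subtype, map_subtype_le _, P.isPGroup'.map L.subtype, ?_⟩
  rw [relIndex, subgroupOf, comap_map_eq_self_of_injective L.subtype_injective]
  exact P.not_dvd_index

/- A Sylow `p`-subgroup of `H` is then a Sylow `p`-subgroup of `K`. -/
lemma exists_conj_mem_of_index_dvd_mul_index (hp : p.Prime) {H K : Subgroup G} {e : ℕ}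
    (hHK : ∀ t ∈ H, IsPElement p t → t ∈ K) (he : ¬ p ∣ e) (hd : H.index ∣ e * K.index)
    {x : G} (hx : IsPElement p x) (hxK : x ∈ K) : ∃ k ∈ K, k * x * k⁻¹ ∈ H := by
  obtain ⟨S, hSH, hS, hSi⟩ := exists_isPGroup_not_dvd_relIndex hp H
  have hSK : S ≤ K := fun s hs ↦ hHK s (hSH hs) ((isPGroup_iff_forall_mem_isPElement hp).1 hS s hs)
  have hdvd : S.relIndex K ∣ S.relIndex H * e := by
    refine Nat.dvd_of_mul_dvd_mul_right (Nat.pos_of_ne_zero K.index_ne_zero_of_finite) ?_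
    rw [relIndex_mul_index hSK, ← relIndex_mul_index hSH, mul_assoc]
    exact mul_dvd_mul_left _ hd
  have hSKi : ¬ p ∣ S.relIndex K := fun h ↦
    (hp.dvd_mul.1 (h.trans hdvd)).elim hSi he
  obtain ⟨k, hk, hkx⟩ := exists_conj_mem_of_not_dvd_relIndex hp hSKi hx hxK
  exact ⟨k, hk, hSH hkx⟩

lemma not_dvd_index_of_forall_isPElement_mem (hp : p.Prime) {H K : Subgroup G}
    (hHK : ∀ t ∈ H, IsPElement p t → t ∈ K) (hH : ¬ p ∣ H.index) : ¬ p ∣ K.index := by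
  obtain ⟨S, hSH, hS, hSi⟩ := exists_isPGroup_not_dvd_relIndex hp H
  have hSK : S ≤ K := fun s hs ↦ hHK s (hSH hs) ((isPGroup_iff_forall_mem_isPElement hp).1 hS s hs)
  intro h
  have := h.trans (index_dvd_of_le hSK)
  rw [← relIndex_mul_index hSH] at this
  exact (hp.dvd_mul.1 this).elim hSi hH

lemma exists_eq_mul_of_coprime_index {H K : Subgroup G} (hc : H.index.Coprime K.index) (g : G) :
    ∃ k ∈ K, ∃ h ∈ H, g = k * h := by
  have hle : H.index ≤ H.relIndex K := by
    refine Nat.le_of_dvd (Nat.pos_of_ne_zero FiniteIndex.index_ne_zero)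
      (hc.dvd_of_dvd_mul_right ?_)
    rw [← inf_relIndex_right, relIndex_mul_index inf_le_right]
    exact index_dvd_of_le inf_le_left
  let f := quotientSubgroupOfEmbeddingOfLE H (le_top : K ≤ ⊤)
  have hf : Function.Surjective f :=
    (f.injective.bijective_of_nat_card_le (H.relIndex_top_right.trans_le hle)).2
  obtain ⟨c, hcg⟩ := hf ((⟨g, mem_top g⟩ : (⊤ : Subgroup G)) : _ ⧸ H.subgroupOf ⊤)
  obtain ⟨k, rfl⟩ := QuotientGroup.mk_surjective c
  rw [quotientSubgroupOfEmbeddingOfLE_apply_mk, QuotientGroup.eq] at hcg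
  exact ⟨k, k.2, (k : G)⁻¹ * g, hcg, (mul_inv_cancel_left _ _).symm⟩

lemma commute_conj_of_coprime_classSize {a b : G} (hc : (classSize a).Coprime (classSize b))
    (hab : Commute a b) (g : G) : Commute (g * a * g⁻¹) b := by
  obtain ⟨k, hk, h, hh, rfl⟩ := exists_eq_mul_of_coprime_index
    (H := centralizer {a}) (K := centralizer {b}) hc g
  have hha : h * a * h⁻¹ = a :=
    conj_eq_self_iff_commute.2 (mem_centralizer_singleton_iff_commute.1 hh)
  have hkb : k⁻¹ * b * k = b := by
    rw [mul_assoc, inv_mul_eq_iff_eq_mul]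
    exact (mem_centralizer_singleton_iff.1 hk).symm
  have hconj : k * h * a * (k * h)⁻¹ = k * (h * a * h⁻¹) * k⁻¹ := by group
  rw [hconj, hha, commute_conj_left_iff, hkb]
  exact hab

lemma exists_isPElement_notMem_center_of_dvd (hp : p.Prime) {g : G} (hg : p ∣ classSize g) :
    ∃ t : G, IsPElement p t ∧ t ∉ center G := by
  by_contra! hcon
  exact not_dvd_index_of_forall_isPElement_mem hp (H := ⊤)
    (fun t _ ht ↦ center_le_centralizer _ (hcon t ht)) (by simpa using hp.ne_one) hg

lemma exists_commute_isPElement_notMem_center (hp : p.Prime) {g h t : G}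
    (hgh : classSize g ∣ classSize h) (hth : Commute t h) (ht : IsPElement p t)
    (htc : t ∉ center G) : ∃ s, Commute s g ∧ IsPElement p s ∧ s ∉ center G := by
  by_contra! hcon
  obtain ⟨k, -, hk⟩ := exists_conj_mem_of_index_dvd_mul_index hp (e := 1) (x := t)
    (H := centralizer {g}) (K := centralizer {h})
    (fun s hs hsp ↦ center_le_centralizer _
      (hcon s (mem_centralizer_singleton_iff_commute.1 hs) hsp))
    hp.not_dvd_one (by rwa [one_mul]) ht (mem_centralizer_singleton_iff_commute.2 hth)
  exact htc (conj_mem_center_iff.1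
    (hcon _ (mem_centralizer_singleton_iff_commute.1 hk) (ht.conj k)))

end Conjugation

section SubsingletonSylow

variable {G : Type*} [Group G] {p : ℕ}

lemma IsPElement.mem_sylow [Fact p.Prime] [Subsingleton (Sylow p G)] {x : G}
    (hx : IsPElement p x) (P : Sylow p G) : x ∈ P := by
  obtain ⟨Q, hQ⟩ := (hx.isPGroup_zpowers Fact.out).exists_le_sylow
  exact Subsingleton.elim Q P ▸ hQ (mem_zpowers x)

variable [Finite G]

lemma exists_sylow_le_centralizer [Fact p.Prime] {a b : G} (hb : ¬ p ∣ classSize b)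
    (ha : IsPElement p a) (hab : Commute a b) :
    ∃ Q : Sylow p G, a ∈ Q ∧ (Q : Subgroup G) ≤ centralizer {b} := by
  have hp : p.Prime := Fact.out
  let L : Subgroup G := centralizer {b}
  have haL : a ∈ L := mem_centralizer_singleton_iff_commute.2 hab
  have hpa : IsPGroup p (zpowers (⟨a, haL⟩ : L)) :=
    (isPElement_subgroup_coe_iff (L := L) (a := ⟨a, haL⟩).1 ha).isPGroup_zpowers hp
  obtain ⟨P, hP⟩ := hpa.exists_le_sylow
  have hi : ¬ p ∣ ((P : Subgroup L).map L.subtype).index := by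
    rw [index_map_subtype]
    exact fun h ↦ (hp.dvd_mul.1 h).elim P.not_dvd_index hb
  exact ⟨(P.isPGroup'.map L.subtype).toSylow hi, ⟨_, hP (mem_zpowers _), rfl⟩,
    map_subtype_le _⟩

lemma subsingleton_sylow_of_not_dvd_classSize [Fact p.Prime]
    (h : ∀ b : G, p.Coprime (orderOf b) → ¬ p ∣ classSize b) : Subsingleton (Sylow p G) := by
  refine subsingleton_of_forall_fixedBy_nonempty (G := G) fun g ↦ ?_
  obtain ⟨a, -, b, -, ha, hb, hab, rfl⟩ := exists_isPElement_mul_eq (p := p) Fact.out g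
  obtain ⟨Q, haQ, hQb⟩ := exists_sylow_le_centralizer (h b hb) ha hab
  refine ⟨Q, Sylow.smul_eq_iff_mem_normalizer.2 (mul_mem (le_normalizer haQ) ?_)⟩
  exact centralizer_le_normalizer _ fun x hx ↦
    (mem_centralizer_singleton_iff.1 (hQb hx))

lemma commute_of_not_dvd_classSize (hp : p.Prime)
    (h : ∀ b : G, p.Coprime (orderOf b) → ¬ p ∣ classSize b) {x b : G} (hx : IsPElement p x)
    (hb : ¬ p ∣ classSize b) : Commute x b := by
  have := Fact.mk hp
  have := subsingleton_sylow_of_not_dvd_classSize h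
  obtain ⟨Q, -, hQb⟩ := exists_sylow_le_centralizer hb ⟨0, orderOf_one⟩ (.one_left b)
  exact mem_centralizer_singleton_iff_commute.1 (hQb (hx.mem_sylow Q))

lemma isPElement_mul_of_not_dvd_classSize (hp : p.Prime)
    (h : ∀ b : G, p.Coprime (orderOf b) → ¬ p ∣ classSize b) {x y : G} (hx : IsPElement p x)
    (hy : IsPElement p y) : IsPElement p (x * y) := by
  have := Fact.mk hp
  have := subsingleton_sylow_of_not_dvd_classSize h
  obtain ⟨P⟩ : Nonempty (Sylow p G) := inferInstance
  exact (isPGroup_iff_forall_mem_isPElement hp).1 P.isPGroup' _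
    (mul_mem (hx.mem_sylow P) (hy.mem_sylow P))

lemma mem_center_of_forall_not_dvd_classSize (hp : p.Prime) (h : ∀ g : G, ¬ p ∣ classSize g)
    {x : G} (hx : IsPElement p x) : x ∈ center G :=
  mem_center_iff.2 fun g ↦ (commute_of_not_dvd_classSize hp (fun b _ ↦ h b) hx (h g)).symm

lemma commute_of_not_dvd_relIndex_centralizer (hp : p.Prime) {L : Subgroup G}
    (h : ∀ b ∈ L, p.Coprime (orderOf b) → ¬ p ∣ (centralizer {b}).relIndex L) {x b : G}
    (hxL : x ∈ L) (hbL : b ∈ L) (hx : IsPElement p x) (hb : p.Coprime (orderOf b)) :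
    Commute x b := by
  have h' (c : L) (hc : p.Coprime (orderOf c)) : ¬ p ∣ classSize c :=
    classSize_subgroup_coe c ▸ h c c.2 (by rwa [Subgroup.orderOf_coe])
  have hxL : IsPElement p (⟨x, hxL⟩ : L) := isPElement_subgroup_coe_iff.1 hx
  have hbL := h' ⟨b, hbL⟩ (by rwa [Subgroup.orderOf_mk])
  exact congrArg Subtype.val (commute_of_not_dvd_classSize hp h' hxL hbL)

end SubsingletonSylow

section Commutator

variable {G : Type*} [Group G] {a b d : G}

lemma pow_conj_eq_pow_mul (hda : Commute d a) (h : a * b * a⁻¹ = d * b) (k : ℕ) :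
    a ^ k * b * (a ^ k)⁻¹ = d ^ k * b := by
  induction k with
  | zero => simp
  | succ k ih =>
    calc a ^ (k + 1) * b * (a ^ (k + 1))⁻¹ = a * (a ^ k * b * (a ^ k)⁻¹) * a⁻¹ := by
          rw [pow_succ']; simp only [mul_inv_rev, mul_assoc]
      _ = a * d ^ k * b * a⁻¹ := by rw [ih]; simp only [mul_assoc]
      _ = d ^ k * (a * b * a⁻¹) := by rw [← (hda.pow_left k).eq]; simp only [mul_assoc]
      _ = d ^ (k + 1) * b := by rw [h, ← mul_assoc, ← pow_succ]

lemma pow_orderOf_eq_one_of_conj_eq_mul (hda : Commute d a) (h : a * b * a⁻¹ = d * b) :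
    d ^ orderOf a = 1 := by
  simpa [pow_orderOf_eq_one, eq_comm] using pow_conj_eq_pow_mul hda h (orderOf a)

lemma eq_one_of_conj_eq_mul (hda : Commute d a) (h : a * b * a⁻¹ = d * b)
    (ho : (orderOf d).Coprime (orderOf a)) : d = 1 :=
  orderOf_eq_one_iff.1
    (ho.eq_one_of_dvd (orderOf_dvd_of_pow_eq_one (pow_orderOf_eq_one_of_conj_eq_mul hda h)))

lemma commute_of_conj_eq_mul (hda : Commute d a) (hdb : Commute d b) (h : a * b * a⁻¹ = d * b)
    (ho : (orderOf a).Coprime (orderOf b)) : Commute a b := by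
  have hdob : d ^ orderOf b = 1 := by
    have hpow : (a * b * a⁻¹) ^ orderOf b = 1 := by
      rw [conj_pow, pow_orderOf_eq_one, mul_one, mul_inv_cancel]
    rwa [h, hdb.mul_pow, pow_orderOf_eq_one, mul_one] at hpow
  have hd : d = 1 := eq_one_of_conj_eq_mul hda h
    (ho.symm.of_dvd_left (orderOf_dvd_of_pow_eq_one hdob))
  rwa [hd, one_mul, conj_eq_self_iff_commute] at h

lemma commute_of_conj_mul_inv_mem_center (h : a * b * a⁻¹ * b⁻¹ ∈ center G)
    (ho : (orderOf a).Coprime (orderOf b)) : Commute a b := by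
  have hcomm (g : G) : Commute (a * b * a⁻¹ * b⁻¹) g := (mem_center_iff.1 h g).symm
  exact commute_of_conj_eq_mul (hcomm a) (hcomm b) (inv_mul_cancel_right _ b).symm ho

lemma commute_conj_of_conj_mul_inv_mem_center {x : G} (hx : Commute x b)
    (h : a * b * a⁻¹ * b⁻¹ ∈ center G) : Commute (a * x * a⁻¹) b := by
  have hcomm : Commute (a * x * a⁻¹) (a * b * a⁻¹ * b⁻¹) := mem_center_iff.1 h _
  have hb : b = (a * b * a⁻¹ * b⁻¹)⁻¹ * (a * b * a⁻¹) := by group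
  exact hb ▸ hcomm.inv_right.mul_right ((Commute.conj_iff a).2 hx)

end Commutator

section Index

variable {G : Type*} [Group G] {p : ℕ}

lemma classSize_dvd_of_centralizer_le {a b : G} (h : centralizer {a} ≤ centralizer {b}) :
    classSize b ∣ classSize a :=
  index_dvd_of_le h

lemma ordProj_index_dvd_relIndex (hp : p.Prime) {H S : Subgroup G} (hS : ¬ p ∣ S.index) :
    ordProj[p] H.index ∣ H.relIndex S := by
  have hcop : (ordProj[p] H.index).Coprime S.index :=
    (hp.coprime_iff_not_dvd.2 hS).pow_left _
  refine hcop.dvd_of_dvd_mul_right ((Nat.ordProj_dvd _ p).trans ?_)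
  rw [← inf_relIndex_right, relIndex_mul_index inf_le_right]
  exact index_dvd_of_le inf_le_left

variable [Finite G]

lemma centralizer_eq_of_le_of_classSize_le {a b : G} (h : centralizer {a} ≤ centralizer {b})
    (hab : classSize a ≤ classSize b) : centralizer {a} = centralizer {b} :=
  by_contra fun hne ↦ (index_strictAnti (h.lt_of_ne hne)).not_ge hab

lemma relIndex_center_le_ordProj (hp : p.Prime) {Q Y : Subgroup G} (hQ : IsPGroup p Q)
    (hQY : Q ≤ Y) : (center G).relIndex Q ≤ ordProj[p] ((center G).relIndex Y) := by
  have := Fact.mk hp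
  obtain ⟨j, hj⟩ := hQ.index ((center G).subgroupOf Q)
  have hdvd : (center G).relIndex Q ∣ (center G).relIndex Y := by
    rw [← relIndex_subgroupOf hQY]
    exact relIndex_dvd_index_of_normal _ _
  rw [relIndex, hj] at hdvd ⊢
  exact Nat.pow_le_pow_right hp.pos
    ((hp.pow_dvd_iff_le_factorization FiniteIndex.index_ne_zero).1 hdvd)

/- The map `t ↦ t * v * t⁻¹` from cosets of `centralizer {v}` to cosets of the center is injective
and misses the trivial coset. -/
lemma relIndex_centralizer_lt_relIndex_center {S Q : Subgroup G} {v : G} (hv : v ∉ center G)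
    (hS : ∀ t ∈ S, (orderOf t).Coprime (orderOf v)) (hSQ : ∀ t ∈ S, t * v * t⁻¹ ∈ Q) :
    (centralizer {v}).relIndex S < (center G).relIndex Q := by
  let f (c : S ⧸ (centralizer {v}).subgroupOf S) : Q ⧸ (center G).subgroupOf Q :=
    QuotientGroup.mk ⟨c.out * v * (c.out : G)⁻¹, hSQ _ c.out.2⟩
  have f_injective : Function.Injective f := fun c d hcd ↦ by
    rw [← QuotientGroup.out_eq' c, ← QuotientGroup.out_eq' d, QuotientGroup.eq, mem_subgroupOf,
      mem_centralizer_singleton_iff_commute]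
    refine commute_of_conj_mul_inv_mem_center ?_ (hS _ (c.out⁻¹ * d.out).2)
    have hmem : (c.out * v * (c.out : G)⁻¹)⁻¹ * (d.out * v * (d.out : G)⁻¹) ∈ center G :=
      mem_subgroupOf.1 (QuotientGroup.eq.1 hcd)
    convert! conj_mem_center_iff (k := v * (c.out : G)⁻¹).2 hmem using 1
    push_cast
    group
  have one_notMem_range : ((1 : Q) : Q ⧸ (center G).subgroupOf Q) ∉ Set.range f := by
    rintro ⟨c, hc⟩
    have hmem : (c.out * v * (c.out : G)⁻¹)⁻¹ * 1 ∈ center G :=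
      mem_subgroupOf.1 (QuotientGroup.eq.1 hc)
    rw [mul_one, inv_mem_iff, conj_mem_center_iff] at hmem
    exact hv hmem
  have := Fintype.ofFinite (S ⧸ (centralizer {v}).subgroupOf S)
  have := Fintype.ofFinite (Q ⧸ (center G).subgroupOf Q)
  rw [relIndex, relIndex, index_eq_card, index_eq_card, Nat.card_eq_fintype_card,
    Nat.card_eq_fintype_card]
  exact Fintype.card_lt_of_injective_of_notMem f f_injective one_notMem_range

/- Such a `y` maps to a nontrivial central element of `S ⧸ (center G ⊓ S)`. -/
lemma exists_notMem_center_forall_conj_mul_inv_mem [Fact p.Prime] {S : Subgroup G}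
    (hS : IsPGroup p S) (hSc : ¬ S ≤ center G) :
    ∃ y ∈ S, y ∉ center G ∧ ∀ t ∈ S, t * y * t⁻¹ * y⁻¹ ∈ center G := by
  let Z := (center G).subgroupOf S
  have : Nontrivial (S ⧸ Z) := QuotientGroup.nontrivial_iff.2 (mt subgroupOf_eq_top.1 hSc)
  have := (hS.to_quotient Z).center_nontrivial
  obtain ⟨⟨w, hw⟩, hwne⟩ := exists_ne (1 : center (S ⧸ Z))
  obtain ⟨y, rfl⟩ := QuotientGroup.mk_surjective w
  refine ⟨y, y.2, fun hy ↦ hwne (Subtype.ext ((QuotientGroup.eq_one_iff y).2 hy)), fun t ht ↦ ?_⟩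
  have hone : ((⟨t, ht⟩ * y * (⟨t, ht⟩ : S)⁻¹ * y⁻¹ : S) : S ⧸ Z) = 1 := by
    rw [QuotientGroup.mk_mul, QuotientGroup.mk_mul, QuotientGroup.mk_mul, mem_center_iff.1 hw,
      mul_assoc, ← QuotientGroup.mk_mul, ← QuotientGroup.mk_mul]
    simp
  exact mem_subgroupOf.1 ((QuotientGroup.eq_one_iff _).1 hone)

end Index

/-! ### Uniform class sizes -/

section UniformClassSize

lemma lt_of_forall_ordProj_lt {n k : ℕ} (hn : n.primeFactors.Nontrivial) (hk : k ≠ 0)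
    (h : ∀ l ∈ n.primeFactors, ∀ l' ∈ n.primeFactors, l ≠ l' → ordProj[l] n < ordProj[l'] k) :
    n < k := by
  have hn0 : n ≠ 0 := by
    rintro rfl
    simp at hn
  obtain ⟨σ, hσ, -⟩ := n.primeFactors.countable_toSet.exists_cycleOn
  have hdvd : ∏ l ∈ n.primeFactors, ordProj[l] k ∣ k :=
    Finset.prod_dvd_of_isRelPrime (fun l hl l' hl' hne ↦ Nat.coprime_iff_isRelPrime.1
      (Nat.coprime_pow_primes _ _ (Nat.prime_of_mem_primeFactors hl)
        (Nat.prime_of_mem_primeFactors hl') hne)) fun l _ ↦ Nat.ordProj_dvd k l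
  calc n = ∏ l ∈ n.primeFactors, ordProj[l] n := by
        conv_lhs => rw [← Nat.prod_factorization_pow_eq_self hn0]
        exact Nat.prod_factorization_eq_prod_primeFactors _
    _ < ∏ l ∈ n.primeFactors, ordProj[σ l] k :=
        Finset.prod_lt_prod_of_nonempty (fun l _ ↦ Nat.ordProj_pos n l)
          (fun l hl ↦ h l hl (σ l) (hσ.1.mapsTo hl) (hσ.apply_ne hn hl).symm) hn.nonempty
    _ = ∏ l ∈ n.primeFactors, ordProj[l] k :=
        Finset.prod_nbij σ hσ.1.mapsTo hσ.1.injOn hσ.1.surjOn fun _ _ ↦ rfl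
    _ ≤ k := Nat.le_of_dvd (Nat.pos_of_ne_zero hk) hdvd

end UniformClassSize

/-- All noncentral elements have class size `n`. By Itô such a finite nonabelian group has prime
power `n` (`HasUniformClassSize.isPrimePow`). -/
def HasUniformClassSize (G : Type*) [Group G] (n : ℕ) : Prop :=
  ∀ g : G, g ∉ center G → classSize g = n

namespace HasUniformClassSize

variable {G : Type*} [Group G] [Finite G] {n : ℕ} {g h : G}

lemma centralizer_eq_of_le (hG : HasUniformClassSize G n) (hg : g ∉ center G) (hh : h ∉ center G)
    (hle : centralizer {g} ≤ centralizer {h}) : centralizer {g} = centralizer {h} :=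
  centralizer_eq_of_le_of_classSize_le hle ((hG g hg).trans (hG h hh).symm).le

lemma centralizer_eq_of_coprime (hG : HasUniformClassSize G n) (hg : g ∉ center G)
    (hh : h ∉ center G) (hgh : Commute g h) (ho : (orderOf g).Coprime (orderOf h)) :
    centralizer {g} = centralizer {h} := by
  have hmul := centralizer_singleton_mul hgh ho
  have hle_left : centralizer {g * h} ≤ centralizer {g} := hmul.trans_le inf_le_left
  have hle_right : centralizer {g * h} ≤ centralizer {h} := hmul.trans_le inf_le_right
  have hc : g * h ∉ center G := fun hc ↦ hg <| centralizer_singleton_eq_top_iff.1 <|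
    top_unique ((centralizer_singleton_eq_top_iff.2 hc).ge.trans hle_left)
  rw [← hG.centralizer_eq_of_le hc hg hle_left, hG.centralizer_eq_of_le hc hh hle_right]

lemma exists_commute_isPElement (hG : HasUniformClassSize G n) {l : ℕ} (hl : l ∈ n.primeFactors)
    (hg : g ∉ center G) : ∃ t, Commute t g ∧ IsPElement l t ∧ t ∉ center G := by
  have hlp := Nat.prime_of_mem_primeFactors hl
  obtain ⟨t, ht, htc⟩ := exists_isPElement_notMem_center_of_dvd hlp
    (hG g hg ▸ Nat.dvd_of_mem_primeFactors hl)
  exact exists_commute_isPElement_notMem_center hlp (by rw [hG g hg, hG t htc])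
    (Commute.refl t) ht htc

lemma exists_isPElement_centralizer_eq (hG : HasUniformClassSize G n) {l : ℕ}
    (hl : l ∈ n.primeFactors) (hg : g ∉ center G) :
    ∃ t, IsPElement l t ∧ t ∉ center G ∧ centralizer {g} = centralizer {t} := by
  have hlp := Nat.prime_of_mem_primeFactors hl
  obtain ⟨a, ha, p, hp, hpa, hac⟩ : ∃ a ∈ zpowers g, ∃ p : ℕ, p.Prime ∧ IsPElement p a ∧
      a ∉ center G := by
    by_contra! hcon
    exact hg (mem_of_forall_isPElement_mem_zpowers g hcon)
  have hga : centralizer {g} = centralizer {a} :=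
    hG.centralizer_eq_of_le hg hac (centralizer_singleton_le_of_mem_zpowers ha)
  obtain rfl | hpl := eq_or_ne p l
  · exact ⟨a, hpa, hac, hga⟩
  obtain ⟨t, hta, ht, htc⟩ := hG.exists_commute_isPElement hl hac
  exact ⟨t, ht, htc, hga.trans <| hG.centralizer_eq_of_coprime hac htc hta.symm <|
    hpa.orderOf_coprime_orderOf hp hlp hpl ht⟩

lemma centralizer_eq_of_commute (hG : HasUniformClassSize G n) (hn : n.primeFactors.Nontrivial)
    (hg : g ∉ center G) (hh : h ∉ center G) (hgh : Commute g h) :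
    centralizer {g} = centralizer {h} := by
  obtain ⟨l, hl, l', hl', hne⟩ := hn
  obtain ⟨a, ha, hac, hga⟩ := hG.exists_isPElement_centralizer_eq hl hg
  obtain ⟨b, hb, hbc, hhb⟩ := hG.exists_isPElement_centralizer_eq hl' hh
  have hab : a ∈ centralizer {b} := by
    rw [← hhb, mem_centralizer_singleton_comm, ← hga]
    exact mem_centralizer_singleton_iff_commute.2 hgh.symm
  rw [hga, hhb]
  exact hG.centralizer_eq_of_coprime hac hbc (mem_centralizer_singleton_iff_commute.1 hab)
    (ha.orderOf_coprime_orderOf (Nat.prime_of_mem_primeFactors hl)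
      (Nat.prime_of_mem_primeFactors hl') hne hb)

lemma commute_of_commute (hG : HasUniformClassSize G n) (hn : n.primeFactors.Nontrivial)
    (hg : g ∉ center G) {c d : G} (hc : Commute c g) (hd : Commute d g) : Commute c d := by
  by_cases hcc : c ∈ center G
  · exact (mem_center_iff.1 hcc d).symm
  · rw [← mem_centralizer_singleton_iff_commute,
      hG.centralizer_eq_of_commute hn hg hcc hc.symm, mem_centralizer_singleton_iff_commute] at hd
    exact hd.symm

lemma relIndex_center_centralizer_eq (hG : HasUniformClassSize G n) (hg : g ∉ center G)
    (hh : h ∉ center G) :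
    (center G).relIndex (centralizer {g}) = (center G).relIndex (centralizer {h}) := by
  refine Nat.eq_of_mul_eq_mul_right (classSize_pos g) ?_
  rw [classSize, relIndex_mul_index (center_le_centralizer _), ← classSize, hG g hg, ← hG h hh,
    classSize, relIndex_mul_index (center_le_centralizer _)]

lemma relIndex_center_centralizer_le (hG : HasUniformClassSize G n)
    (hn : n.primeFactors.Nontrivial) (hg : g ∉ center G) :
    (center G).relIndex (centralizer {g}) ≤ n := by
  obtain ⟨h, hgh⟩ : ∃ h, ¬ Commute h g := by
    by_contra! hcon
    exact hg (mem_center_iff.2 hcon)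
  have hh : h ∉ center G := fun hh ↦ hgh (mem_center_iff.1 hh g).symm
  have hinf : centralizer {h} ⊓ centralizer {g} ≤ center G := fun w ⟨hwh, hwg⟩ ↦ by
    by_contra hw
    exact hgh (hG.commute_of_commute hn hw
      (mem_centralizer_singleton_iff_commute.1 hwh).symm
      (mem_centralizer_singleton_iff_commute.1 hwg).symm)
  calc (center G).relIndex (centralizer {g})
      ≤ (centralizer {h} ⊓ centralizer {g}).relIndex (centralizer {g}) :=
        Nat.le_of_dvd (Nat.pos_of_ne_zero FiniteIndex.index_ne_zero)
          (relIndex_dvd_of_le_left _ hinf)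
    _ = (centralizer {h}).relIndex (centralizer {g}) := inf_relIndex_right _ _
    _ ≤ (centralizer {h}).relIndex ⊤ := relIndex_le_of_le_right le_top FiniteIndex.index_ne_zero
    _ = n := by rw [relIndex_top_right, ← classSize, hG h hh]

lemma ordProj_lt_ordProj (hG : HasUniformClassSize G n) (hn : n.primeFactors.Nontrivial)
    (hg : g ∉ center G) {l l' : ℕ} (hl : l ∈ n.primeFactors) (hl' : l' ∈ n.primeFactors)
    (hne : l ≠ l') : ordProj[l] n < ordProj[l'] ((center G).relIndex (centralizer {g})) := by
  have hlp := Nat.prime_of_mem_primeFactors hl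
  have hlp' := Nat.prime_of_mem_primeFactors hl'
  have := Fact.mk hlp
  let S : Sylow l G := default
  obtain ⟨y, -, hyc, hSy⟩ := exists_notMem_center_forall_conj_mul_inv_mem S.isPGroup' fun hSc ↦
    S.not_dvd_index ((hG g hg ▸ Nat.dvd_of_mem_primeFactors hl).trans
      (index_dvd_of_le (hSc.trans (center_le_centralizer _))))
  obtain ⟨v, hvy, hv, hvc⟩ := hG.exists_commute_isPElement hl' hyc
  have hyv : centralizer {y} = centralizer {v} :=
    hG.centralizer_eq_of_commute hn hyc hvc hvy.symm
  obtain ⟨Q, hQY, hQ, hQi⟩ := exists_isPGroup_not_dvd_relIndex hlp' (centralizer {y})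
  have hSQ (t : G) (ht : t ∈ S) : t * v * t⁻¹ ∈ Q := by
    have hy : Commute (t * v * t⁻¹) y := commute_conj_of_conj_mul_inv_mem_center hvy (hSy t ht)
    obtain ⟨k, hk, hkQ⟩ := exists_conj_mem_of_not_dvd_relIndex hlp' hQi (hv.conj t)
      (mem_centralizer_singleton_iff_commute.2 hy)
    rwa [conj_eq_self_iff_commute.2 (hG.commute_of_commute hn hyc
      (mem_centralizer_singleton_iff_commute.1 hk) hy)] at hkQ
  have hS (t : G) (ht : t ∈ S) : (orderOf t).Coprime (orderOf v) :=
    ((isPGroup_iff_forall_mem_isPElement hlp).1 S.isPGroup' t ht).orderOf_coprime_orderOf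
      hlp hlp' hne hv
  calc ordProj[l] n ≤ (centralizer {y}).relIndex S := by
        rw [← hG y hyc]
        exact Nat.le_of_dvd (Nat.pos_of_ne_zero FiniteIndex.index_ne_zero)
          (ordProj_index_dvd_relIndex hlp S.not_dvd_index)
    _ < (center G).relIndex Q := hyv ▸ relIndex_centralizer_lt_relIndex_center hvc hS hSQ
    _ ≤ ordProj[l'] ((center G).relIndex (centralizer {y})) :=
        relIndex_center_le_ordProj hlp' hQ hQY
    _ = ordProj[l'] ((center G).relIndex (centralizer {g})) := by
        rw [hG.relIndex_center_centralizer_eq hyc hg]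

lemma isPrimePow (hG : HasUniformClassSize G n) (hg : g ∉ center G) : IsPrimePow n := by
  have hn_one : n ≠ 1 := fun hn ↦ hg (classSize_eq_one_iff.1 ((hG g hg).trans hn))
  have hn_pos : n ≠ 0 := hG g hg ▸ (classSize_pos g).ne'
  by_contra hnp
  have hnt := (Nat.not_isPrimePow_iff_nontrivial_of_two_le (by lia)).1 hnp
  exact (lt_of_forall_ordProj_lt hnt FiniteIndex.index_ne_zero fun l hl l' hl' hne ↦
    hG.ordProj_lt_ordProj hnt hg hl hl' hne).not_ge (hG.relIndex_center_centralizer_le hnt hg)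

end HasUniformClassSize

/-! ### Groups with four class sizes -/

/-- The hypothesis of the Beltrán–Felipe theorem: `N(G) = {1, m, n, m * n}` with `m` and `n` coprime
and greater than `1`. -/
structure HasFourClassSizes (G : Type*) [Group G] (m n : ℕ) : Prop where
  one_lt_left : 1 < m
  one_lt_right : 1 < n
  coprime : m.Coprime n
  range_eq : {k : ℕ | ∃ x : G, classSize x = k} = {1, m, n, m * n}

namespace HasFourClassSizes

variable {G : Type*} [Group G] {m n p q r : ℕ} {a g u x z : G}

lemma swap (hG : HasFourClassSizes G m n) : HasFourClassSizes G n m where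
  one_lt_left := hG.one_lt_right
  one_lt_right := hG.one_lt_left
  coprime := hG.coprime.symm
  range_eq := by rw [hG.range_eq, mul_comm, Set.insert_comm m n]

lemma classSize_eq (hG : HasFourClassSizes G m n) (g : G) :
    classSize g = 1 ∨ classSize g = m ∨ classSize g = n ∨ classSize g = m * n :=
  hG.range_eq.subset ⟨g, rfl⟩

lemma exists_classSize_eq_left (hG : HasFourClassSizes G m n) : ∃ g : G, classSize g = m :=
  hG.range_eq.superset (Or.inr (Or.inl rfl))

lemma exists_classSize_eq_mul (hG : HasFourClassSizes G m n) : ∃ g : G, classSize g = m * n :=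
  hG.range_eq.superset (Or.inr (Or.inr (Or.inr rfl)))

lemma classSize_dvd_mul (hG : HasFourClassSizes G m n) (g : G) : classSize g ∣ m * n := by
  rcases hG.classSize_eq g with h | h | h | h <;> simp [h]

lemma notMem_center_of_dvd (hG : HasFourClassSizes G m n) (h : m ∣ classSize g) :
    g ∉ center G := fun hg ↦
  hG.one_lt_left.ne' (Nat.dvd_one.1 (classSize_eq_one_iff.2 hg ▸ h))

lemma left_not_dvd_right (hG : HasFourClassSizes G m n) : ¬ m ∣ n := fun h ↦
  hG.one_lt_left.ne' (hG.coprime.eq_one_of_dvd h)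

lemma not_dvd_right (hG : HasFourClassSizes G m n) (hp : p.Prime) (hpm : p ∣ m) : ¬ p ∣ n :=
  fun hpn ↦ hp.one_lt.ne' (Nat.eq_one_of_dvd_coprimes hG.coprime hpm hpn)

lemma prime_ne (hG : HasFourClassSizes G m n) (hp : p.Prime) (hpm : p ∣ m) (hqn : q ∣ n) :
    p ≠ q := fun hpq ↦ hG.not_dvd_right hp hpm (hpq ▸ hqn)

lemma classSize_eq_left_or_eq_mul_of_dvd (hG : HasFourClassSizes G m n) (h : m ∣ classSize g) :
    classSize g = m ∨ classSize g = m * n := by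
  rcases hG.classSize_eq g with hg | hg | hg | hg
  · exact absurd (classSize_eq_one_iff.1 hg) (hG.notMem_center_of_dvd h)
  · exact Or.inl hg
  · exact absurd (hg ▸ h) hG.left_not_dvd_right
  · exact Or.inr hg

lemma classSize_eq_mul_of_dvd_of_dvd (hG : HasFourClassSizes G m n) (hm : m ∣ classSize g)
    (hn : n ∣ classSize g) : classSize g = m * n :=
  Nat.dvd_antisymm (hG.classSize_dvd_mul g) (hG.coprime.mul_dvd_of_dvd_of_dvd hm hn)

/- `C(u * a)` is contained in `C(u)` and has index at most `m * n`. -/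
lemma centralizer_le_of_classSize_eq_mul [Finite G] (hG : HasFourClassSizes G m n)
    (hu : classSize u = m * n) (hc : Commute u a) (ho : (orderOf u).Coprime (orderOf a)) :
    centralizer {u} ≤ centralizer {a} := by
  have hmul := centralizer_singleton_mul hc ho
  rw [← centralizer_eq_of_le_of_classSize_le (hmul.trans_le inf_le_left)
    (hu ▸ Nat.le_of_dvd (hu ▸ classSize_pos u) (hG.classSize_dvd_mul _)), hmul]
  exact inf_le_right

lemma relIndex_centralizer_eq (hG : HasFourClassSizes G m n) (hx : classSize x = m)
    (hc : Commute x a) (ho : (orderOf x).Coprime (orderOf a)) :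
    (centralizer {a}).relIndex (centralizer {x}) = 1 ∨
      (centralizer {a}).relIndex (centralizer {x}) = n := by
  have hm : 0 < m := one_pos.trans hG.one_lt_left
  have h := hx ▸ relIndex_centralizer_mul_classSize hc ho
  refine (hG.classSize_eq_left_or_eq_mul_of_dvd (h ▸ Dvd.intro_left _ rfl)).imp
    (fun hxa ↦ ?_) fun hxa ↦ ?_
  · exact Nat.eq_of_mul_eq_mul_right hm (by rw [h, hxa, one_mul])
  · exact Nat.eq_of_mul_eq_mul_right hm (by rw [h, hxa, mul_comm])

lemma not_dvd_relIndex_centralizer (hG : HasFourClassSizes G m n) (hp : p.Prime) (hpm : p ∣ m)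
    (hx : classSize x = m) (hc : Commute x a) (ho : (orderOf x).Coprime (orderOf a)) :
    ¬ p ∣ (centralizer {a}).relIndex (centralizer {x}) := by
  rcases hG.relIndex_centralizer_eq hx hc ho with h | h <;> rw [h]
  · exact hp.not_dvd_one
  · exact hG.not_dvd_right hp hpm

lemma exists_conj_commute (hG : HasFourClassSizes G m n) (hp : p.Prime) (hpm : p ∣ m)
    (hx : classSize x = m) (hzp : IsPElement p z) (hzx : Commute z x) (hxa : Commute x a)
    (ho : (orderOf x).Coprime (orderOf a)) :
    ∃ k ∈ centralizer {x}, Commute (k * z * k⁻¹) x ∧ Commute (k * z * k⁻¹) a := by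
  have hz := mem_centralizer_singleton_iff_commute.2 hzx
  obtain ⟨k, hk, hkz⟩ := exists_conj_mem_of_not_dvd_relIndex hp
    (hG.not_dvd_relIndex_centralizer hp hpm hx hxa ho) hzp hz
  exact ⟨k, hk, mem_centralizer_singleton_iff_commute.1 (mul_mem (mul_mem hk hz) (inv_mem hk)),
    mem_centralizer_singleton_iff_commute.1 hkz⟩

variable [Finite G]

lemma commute_of_commute_of_classSize_eq (hG : HasFourClassSizes G m n) (hr : r.Prime)
    (hrm : r ∣ m) (hxr : IsPElement r x) (hx : classSize x = m) {t : G} (htx : Commute t x)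
    (hax : Commute a x) (ht : IsPElement r t) (ha : r.Coprime (orderOf a)) : Commute t a :=
  commute_of_not_dvd_relIndex_centralizer hr
    (fun _ hb hbo ↦ hG.not_dvd_relIndex_centralizer hr hrm hx
      (mem_centralizer_singleton_iff_commute.1 hb).symm (hxr.orderOf_coprime hbo))
    (mem_centralizer_singleton_iff_commute.2 htx) (mem_centralizer_singleton_iff_commute.2 hax)
    ht ha

lemma classSize_ne_right_of_commute_of_ne (hG : HasFourClassSizes G m n) (hr : r.Prime)
    (hrm : r ∣ m) (hp : p.Prime) (hpm : p ∣ m) (hrp : r ≠ p) (hxr : IsPElement r x)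
    (hx : classSize x = m) (hzp : IsPElement p z) (hzx : Commute z x) : classSize z ≠ n := by
  intro hz
  have hle : centralizer {x} ≤ centralizer {z} := by
    refine le_centralizer_of_forall_exists_conj_commute fun g hg ↦ ?_
    obtain ⟨a, ha, b, hb, har, hbr, -, rfl⟩ := exists_isPElement_mul_eq hr g
    have hax := mem_centralizer_singleton_iff_commute.1 (zpowers_le.2 hg ha)
    have hbx := mem_centralizer_singleton_iff_commute.1 (zpowers_le.2 hg hb)
    obtain ⟨k, hk, hkx, hkb⟩ := hG.exists_conj_commute hp hpm hx hzp hzx hbx.symm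
      (hxr.orderOf_coprime hbr)
    exact ⟨k, hk, (hG.commute_of_commute_of_classSize_eq hr hrm hxr hx hax hkx har
      ((hzp.conj k).coprime_orderOf hr hp hrp)).symm.mul_right hkb⟩
  have := classSize_dvd_of_centralizer_le hle
  rw [hz, hx] at this
  exact hG.swap.left_not_dvd_right this

lemma classSize_ne_right_of_commute (hG : HasFourClassSizes G m n) (hr : r.Prime)
    (hrm : r ∣ m) (hxr : IsPElement r x) (hx : classSize x = m) (hz : IsPElement r z)
    (hzx : Commute z x) : classSize z ≠ n := by
  intro hzn
  obtain ⟨q, hq, hqn⟩ := Nat.exists_prime_and_dvd hG.one_lt_right.ne'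
  refine not_dvd_index_of_forall_isPElement_mem hq (H := centralizer {x}) (K := centralizer {z})
    (fun t ht htq ↦ ?_) ?_ (hqn.trans hzn.symm.dvd)
  · exact mem_centralizer_singleton_iff_commute.2 (hG.commute_of_commute_of_classSize_eq hr hrm hxr
      hx hzx (mem_centralizer_singleton_iff_commute.1 ht) hz
      (htq.coprime_orderOf hr hq (hG.prime_ne hr hrm hqn))).symm
  · exact fun hqm ↦ hG.swap.not_dvd_right hq hqn (hx ▸ hqm)

lemma classSize_ne_right (hG : HasFourClassSizes G m n) (hr : r.Prime) (hrm : r ∣ m)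
    (hp : p.Prime) (hpm : p ∣ m) (hxr : IsPElement r x) (hx : classSize x = m)
    (hzp : IsPElement p z) : classSize z ≠ n := by
  intro hz
  obtain ⟨k, hk⟩ := exists_commute_conj_of_not_dvd_classSize hr
    (hz ▸ hG.not_dvd_right hr hrm) hxr
  have hkn : classSize (k * z * k⁻¹) = n := (classSize_conj z k).trans hz
  obtain rfl | hrp := eq_or_ne r p
  · exact hG.classSize_ne_right_of_commute hr hrm hxr hx (hzp.conj k) hk.symm hkn
  · exact hG.classSize_ne_right_of_commute_of_ne hr hrm hp hpm hrp hxr hx (hzp.conj k) hk.symm hkn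

lemma exists_isPElement_classSize_eq (hG : HasFourClassSizes G m n) :
    ∃ r : ℕ, r.Prime ∧ ∃ x : G, IsPElement r x ∧ classSize x = m := by
  by_contra! hcon
  obtain ⟨g, hg⟩ := hG.exists_classSize_eq_left
  refine hG.notMem_center_of_dvd hg.symm.dvd (mem_of_forall_isPElement_mem_zpowers g
    fun a ha r hr har ↦ ?_)
  have hdvd : classSize a ∣ m :=
    hg ▸ classSize_dvd_of_centralizer_le (centralizer_singleton_le_of_mem_zpowers ha)
  rcases hG.classSize_eq a with h | h | h | h
  · exact classSize_eq_one_iff.1 h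
  · exact absurd h (hcon r hr a har)
  · exact absurd (h ▸ hdvd) hG.swap.left_not_dvd_right
  · exact absurd ((Dvd.intro_left m rfl).trans (h ▸ hdvd)) hG.swap.left_not_dvd_right

lemma dvd_mul_of_notMem_center (hG : HasFourClassSizes G m n) (hp : p.Prime)
    (hx : IsPElement p x) (hxc : x ∉ center G) : p ∣ m ∨ p ∣ n := by
  refine hp.dvd_mul.1 (not_not.1 fun h ↦ hxc ?_)
  exact mem_center_of_forall_not_dvd_classSize hp
    (fun g hg ↦ h (hg.trans (hG.classSize_dvd_mul g))) hx

end HasFourClassSizes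

namespace HasFourClassSizes

variable {G : Type*} [Group G] [Finite G] {m n p q r s : ℕ} {a g x y z : G}

lemma exists_centralizer_conj_eq (hG : HasFourClassSizes G m n) (hr : r.Prime) (hs : s.Prime)
    (hrs : r ≠ s) (hsn : s ∣ n) (hxr : IsPElement r x) (hx : classSize x = m)
    (hys : IsPElement s y) (hy : classSize y = m) :
    ∃ k : G, centralizer {k * x * k⁻¹} = centralizer {y} := by
  have hsm : ¬ s ∣ m := hG.swap.not_dvd_right hs hsn
  obtain ⟨S, hSy, hS, hSi⟩ := exists_isPGroup_not_dvd_relIndex hs (centralizer {y})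
  have hSG : ¬ s ∣ S.index := by
    rw [← relIndex_mul_index hSy]
    exact hs.not_dvd_mul hSi (hy ▸ hsm : ¬ s ∣ classSize y)
  have hyS : y ∈ S := by
    obtain ⟨l, hl, hly⟩ := exists_conj_mem_of_not_dvd_relIndex hs hSi hys
      (mem_centralizer_singleton_iff_commute.2 (Commute.refl y))
    rwa [conj_eq_self_iff_commute.2 (mem_centralizer_singleton_iff_commute.1 hl)] at hly
  obtain ⟨k, hk⟩ := exists_forall_conj_mem_of_not_dvd_index hs (H := centralizer {x})
    (hx ▸ hsm : ¬ s ∣ classSize x) hS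
  refine ⟨k⁻¹, ?_⟩
  have hSx : S ≤ centralizer {k⁻¹ * x * k⁻¹⁻¹} := fun t ht ↦ by
    rw [mem_centralizer_singleton_comm, mem_centralizer_singleton_iff_commute,
      commute_conj_left_iff, inv_inv]
    exact (mem_centralizer_singleton_iff_commute.1 (hk t ht)).symm
  replace hx := (classSize_conj x k⁻¹).trans hx
  have hmul := centralizer_singleton_mul
    (mem_centralizer_singleton_iff_commute.1 (hSx hyS)).symm
    ((hxr.conj k⁻¹).orderOf_coprime_orderOf hr hs hrs hys)
  have hxy : classSize (k⁻¹ * x * k⁻¹⁻¹ * y) = m := by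
    refine (hG.classSize_eq_left_or_eq_mul_of_dvd ?_).resolve_right fun h ↦ hSG ?_
    · exact hx ▸ classSize_dvd_of_centralizer_le (hmul.trans_le inf_le_left)
    · exact (hsn.mul_left m).trans (h ▸ index_dvd_of_le ((le_inf hSx hSy).trans_eq hmul.symm))
  exact (centralizer_eq_of_le_of_classSize_le (hmul.trans_le inf_le_left)
    (hxy.trans hx.symm).le).symm.trans
    (centralizer_eq_of_le_of_classSize_le (hmul.trans_le inf_le_right) (hxy.trans hy.symm).le)

/- Otherwise every element of `C(x) = C(y)` commutes with a conjugate of `z` under `C(x)`, whence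
`C(x) ≤ C(z)`. -/
lemma eq_of_centralizer_eq (hG : HasFourClassSizes G m n) (hp : p.Prime) (hpm : p ∣ m)
    (hr : r.Prime) (hrn : r ∣ n) (hs : s.Prime) (hsn : s ∣ n) (hxr : IsPElement r x)
    (hys : IsPElement s y) (hzp : IsPElement p z) (hx : classSize x = m) (hz : classSize z = n)
    (hzx : Commute z x) (hxy : centralizer {x} = centralizer {y}) : s = r := by
  by_contra hsr
  have hy : classSize y = m := by rw [← hx, classSize, classSize, hxy]
  have hzy : Commute z y := mem_centralizer_singleton_iff_commute.1
    (hxy ▸ mem_centralizer_singleton_iff_commute.2 hzx)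
  have hle : centralizer {x} ≤ centralizer {z} := by
    refine le_centralizer_of_forall_exists_conj_commute fun g hg ↦ ?_
    obtain ⟨b, hb, c, hc, hbr, hcr, hbc, rfl⟩ := exists_isPElement_mul_eq hr g
    replace hb := zpowers_le.2 hg hb
    replace hc := zpowers_le.2 hg hc
    have hyb : Commute y b := (mem_centralizer_singleton_iff_commute.1 (hxy ▸ hb)).symm
    have hoyb := hys.orderOf_coprime_orderOf hs hr hsr hbr
    rcases hG.relIndex_centralizer_eq hy hyb hoyb with hidx | hidx
    · obtain ⟨k, hk, hkx, hkc⟩ := hG.exists_conj_commute hp hpm hx hzp hzx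
        (mem_centralizer_singleton_iff_commute.1 hc).symm (hxr.orderOf_coprime hcr)
      refine ⟨k, hk, Commute.mul_right ?_ hkc⟩
      exact mem_centralizer_singleton_iff_commute.1 (relIndex_eq_one.1 hidx
        (hxy ▸ mem_centralizer_singleton_iff_commute.2 hkx))
    · obtain ⟨k, hk, hky, hkb⟩ := hG.exists_conj_commute hp hpm hy hzp hzy hyb hoyb
      refine ⟨k, hxy ▸ hk, hkb.mul_right ?_⟩
      have hsize : classSize (y * b) = m * n := by
        rw [← relIndex_centralizer_mul_classSize hyb hoyb, hidx, hy, mul_comm]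
      have hle := hG.centralizer_le_of_classSize_eq_mul hsize (hky.mul_right hkb).symm <| by
        rw [hyb.orderOf_mul_eq_mul_orderOf_of_coprime hoyb]
        exact (hys.orderOf_coprime_orderOf hs hp (hG.prime_ne hp hpm hsn).symm
          (hzp.conj k)).mul_left (hbr.orderOf_coprime_orderOf hr hp
          (hG.prime_ne hp hpm hrn).symm (hzp.conj k))
      rw [centralizer_singleton_mul hyb hoyb, ← hxy] at hle
      exact (mem_centralizer_singleton_iff_commute.1
        (hle ⟨hc, mem_centralizer_singleton_iff_commute.2 hbc.symm⟩)).symm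
  have := classSize_dvd_of_centralizer_le hle
  rw [hz, hx] at this
  exact hG.swap.left_not_dvd_right this

lemma exists_commute_isPElement_of_classSize_eq_mul (hG : HasFourClassSizes G m n) (hp : p.Prime)
    (hq : q.Prime) (hqmn : q ∣ m * n) (hg : classSize g = m * n) (hap : IsPElement p a)
    (hac : a ∉ center G) (hag : Commute a g) :
    ∃ u w : G, IsPElement p u ∧ IsPElement q w ∧ u ∉ center G ∧ w ∉ center G ∧ Commute u w := by
  obtain ⟨w, hwq, hwc⟩ := exists_isPElement_notMem_center_of_dvd hq (hg ▸ hqmn)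
  obtain ⟨u, huw, hup, huc⟩ := exists_commute_isPElement_notMem_center hp
    (hg ▸ hG.classSize_dvd_mul w) hag hap hac
  exact ⟨u, w, hup, hwq, huc, hwc, huw⟩

lemma exists_commute_notMem_center (hG : HasFourClassSizes G m n) :
    ∃ p q : ℕ, p.Prime ∧ p ∣ m ∧ q.Prime ∧ q ∣ n ∧ ∃ u w : G, IsPElement p u ∧ IsPElement q w ∧
      u ∉ center G ∧ w ∉ center G ∧ Commute u w := by
  obtain ⟨g, hg⟩ := hG.exists_classSize_eq_mul
  obtain ⟨a, ha, l, hl, hal, hac⟩ :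
      ∃ a ∈ zpowers g, ∃ l : ℕ, l.Prime ∧ IsPElement l a ∧ a ∉ center G := by
    by_contra! hcon
    exact hG.notMem_center_of_dvd (hg ▸ Dvd.intro n rfl)
      (mem_of_forall_isPElement_mem_zpowers g hcon)
  have hag : Commute a g := by
    obtain ⟨i, rfl⟩ := mem_zpowers_iff.1 ha
    exact Commute.zpow_self g i
  rcases hG.dvd_mul_of_notMem_center hl hal hac with hlm | hln
  · obtain ⟨q, hq, hqn⟩ := Nat.exists_prime_and_dvd hG.one_lt_right.ne'
    exact ⟨l, q, hl, hlm, hq, hqn, hG.exists_commute_isPElement_of_classSize_eq_mul hl hq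
      (hqn.mul_left m) hg hal hac hag⟩
  · obtain ⟨p, hp, hpm⟩ := Nat.exists_prime_and_dvd hG.one_lt_left.ne'
    obtain ⟨u, w, hu, hw, huc, hwc, huw⟩ := hG.exists_commute_isPElement_of_classSize_eq_mul hl hp
      (hpm.mul_right n) hg hal hac hag
    exact ⟨p, l, hp, hpm, hl, hln, w, u, hw, hu, hwc, huc, huw.symm⟩

end HasFourClassSizes

/-! ### The crossed case -/

/-- The case in which class size `m` is never attained by an `r`-element with `r ∣ m` prime, nor
class size `n` by an `r`-element with `r ∣ n` prime: class size `m` is then attained by an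
`r`-element with `r ∣ n` prime, and vice versa. -/
structure HasCrossedClassSizes (G : Type*) [Group G] (m n : ℕ) : Prop extends
    HasFourClassSizes G m n where
  classSize_ne_left {r : ℕ} {x : G} : r.Prime → r ∣ m → IsPElement r x → classSize x ≠ m
  classSize_ne_right {r : ℕ} {x : G} : r.Prime → r ∣ n → IsPElement r x → classSize x ≠ n

namespace HasCrossedClassSizes

variable {G : Type*} [Group G] {m n p q r s : ℕ} {g u w x z : G}

lemma swap (hG : HasCrossedClassSizes G m n) : HasCrossedClassSizes G n m where
  toHasFourClassSizes := hG.toHasFourClassSizes.swap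
  classSize_ne_left := hG.classSize_ne_right
  classSize_ne_right := hG.classSize_ne_left

lemma classSize_eq_right_or_eq_mul (hG : HasCrossedClassSizes G m n) (hp : p.Prime) (hpm : p ∣ m)
    (hu : IsPElement p u) (huc : u ∉ center G) : classSize u = n ∨ classSize u = m * n :=
  (((hG.classSize_eq u).resolve_left (huc ∘ classSize_eq_one_iff.1)).resolve_left
    (hG.classSize_ne_left hp hpm hu))

variable [Finite G]

lemma exists_isPElement_classSize_eq_left (hG : HasCrossedClassSizes G m n) :
    ∃ r, r.Prime ∧ r ∣ n ∧ ∃ x : G, IsPElement r x ∧ classSize x = m := by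
  obtain ⟨r, hr, x, hxr, hx⟩ := hG.exists_isPElement_classSize_eq
  refine ⟨r, hr, (hG.dvd_mul_of_notMem_center hr hxr
    (hG.notMem_center_of_dvd hx.symm.dvd)).resolve_left fun hrm ↦ ?_, x, hxr, hx⟩
  exact hG.classSize_ne_left hr hrm hxr hx

/- If `classSize u = m * n`, then the centralizer of `u` is contained in that of any conjugate
of an element of class size `n` commuting with `u`. -/
lemma exists_commute_classSize_eq_right (hG : HasCrossedClassSizes G m n) (hp : p.Prime)
    (hpm : p ∣ m) (hup : IsPElement p u) (huc : u ∉ center G) (ho : (orderOf u).Coprime (orderOf w))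
    (huw : Commute u w) :
    ∃ p', p'.Prime ∧ p' ∣ m ∧ ∃ z : G, IsPElement p' z ∧ classSize z = n ∧ Commute z w := by
  rcases hG.classSize_eq_right_or_eq_mul hp hpm hup huc with hu | hu
  · exact ⟨p, hp, hpm, u, hup, hu, huw⟩
  · obtain ⟨p', hp', hpm', z, hzp, hz⟩ := hG.swap.exists_isPElement_classSize_eq_left
    obtain ⟨k, huz⟩ := exists_commute_conj_of_not_dvd_classSize hp
      (hz ▸ hG.not_dvd_right hp hpm) hup
    refine ⟨p', hp', hpm', k * z * k⁻¹, hzp.conj k, (classSize_conj z k).trans hz, ?_⟩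
    exact mem_centralizer_singleton_iff_commute.1 (hG.centralizer_le_of_classSize_eq_mul hu huw ho
      (mem_centralizer_singleton_iff_commute.2 huz.symm))

lemma exists_commute_classSize_eq (hG : HasCrossedClassSizes G m n) :
    ∃ p r : ℕ, p.Prime ∧ p ∣ m ∧ r.Prime ∧ r ∣ n ∧ ∃ x z : G, IsPElement r x ∧ IsPElement p z ∧
      classSize x = m ∧ classSize z = n ∧ Commute x z := by
  obtain ⟨p, r, hp, hpm, hr, hrn, u, w, hu, hw, huc, hwc, huw⟩ := hG.exists_commute_notMem_center
  obtain ⟨p', hp', hpm', z, hzp, hz, hzw⟩ := hG.exists_commute_classSize_eq_right hp hpm hu huc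
    (hu.orderOf_coprime_orderOf hp hr (hG.prime_ne hp hpm hrn) hw) huw
  obtain ⟨r', hr', hrn', x, hxr, hx, hxz⟩ := hG.swap.exists_commute_classSize_eq_right hr hrn hw hwc
    (hw.orderOf_coprime_orderOf hr hp' (hG.prime_ne hp' hpm' hrn).symm hzp) hzw.symm
  exact ⟨p', r', hp', hpm', hr', hrn', x, z, hxr, hzp, hx, hz, hxz⟩

/- If every noncentral `s`-element had class size `m * n`, then every element of `G` would have a
conjugate in `C(x)`. -/
lemma exists_isPElement_classSize_eq_left_of_dvd (hG : HasCrossedClassSizes G m n) (hr : r.Prime)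
    (hs : s.Prime) (hsn : s ∣ n) (hsr : s ≠ r) (hxr : IsPElement r x) (hx : classSize x = m) :
    ∃ y : G, IsPElement s y ∧ classSize y = m := by
  by_contra! hcon
  have size_eq : ∀ t : G, IsPElement s t → t ∉ center G → classSize t = m * n := fun t ht htc ↦ by
    rw [(hG.swap.classSize_eq_right_or_eq_mul hs hsn ht htc).resolve_left (hcon t ht), mul_comm]
  refine hG.notMem_center_of_dvd hx.symm.dvd
    (centralizer_singleton_eq_top_iff.1 (eq_top_of_forall_exists_conj_mem fun g ↦ ?_))
  obtain ⟨g₀, hg₀⟩ := hG.exists_classSize_eq_mul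
  obtain ⟨t₀, ht₀, ht₀c⟩ := exists_isPElement_notMem_center_of_dvd hs (hg₀ ▸ hsn.mul_left m)
  obtain ⟨t, htg, ht, htc⟩ := exists_commute_isPElement_notMem_center hs
    (size_eq t₀ ht₀ ht₀c ▸ hG.classSize_dvd_mul g) (Commute.refl t₀) ht₀ ht₀c
  obtain ⟨k, hk⟩ := exists_conj_mem_of_not_dvd_index hs (H := centralizer {x})
    (hx ▸ hG.swap.not_dvd_right hs hsn : ¬ s ∣ classSize x) ht
  refine ⟨k, hG.centralizer_le_of_classSize_eq_mul ((classSize_conj t k).trans (size_eq t ht htc))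
    (mem_centralizer_singleton_iff_commute.1 hk)
    ((ht.conj k).orderOf_coprime_orderOf hs hr hsr hxr) ?_⟩
  exact mem_centralizer_singleton_iff_commute.2 ((Commute.conj_iff k).2 htg.symm)

lemma prime_eq_of_dvd_right (hG : HasCrossedClassSizes G m n) (hp : p.Prime) (hpm : p ∣ m)
    (hr : r.Prime) (hrn : r ∣ n) (hs : s.Prime) (hsn : s ∣ n) (hxr : IsPElement r x)
    (hzp : IsPElement p z) (hx : classSize x = m) (hz : classSize z = n) (hzx : Commute z x) :
    s = r := by
  by_contra hsr
  obtain ⟨y, hys, hy⟩ := hG.exists_isPElement_classSize_eq_left_of_dvd hr hs hsn hsr hxr hx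
  obtain ⟨k, hk⟩ := hG.exists_centralizer_conj_eq hr hs (Ne.symm hsr) hsn hxr hx hys hy
  exact hsr (hG.eq_of_centralizer_eq hp hpm hr hrn hs hsn (hxr.conj k) hys (hzp.conj k)
    ((classSize_conj x k).trans hx) ((classSize_conj z k).trans hz)
    ((Commute.conj_iff k).2 hzx) hk)

end HasCrossedClassSizes

section Minimal

variable {G : Type*} [Group G]

/-- The set of `r`-elements of the centralizer of `a`. -/
def pElementCentralizer (r : ℕ) (a : G) : Set G :=
  {w | IsPElement r w ∧ Commute w a}

lemma exists_isPElement_forall_normal_mem_or_le_center [Finite G] {g : G} (hg : g ∉ center G) :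
    ∃ q : ℕ, q.Prime ∧ ∃ e : G, IsPElement q e ∧ e ∉ center G ∧
      ∀ M : Subgroup G, M.Normal → M ≤ normalClosure {e} → e ∈ M ∨ M ≤ center G := by
  have exists_primary : ∀ h ∉ center G,
      ∃ a ∈ zpowers h, ∃ q : ℕ, q.Prime ∧ IsPElement q a ∧ a ∉ center G := fun h hh ↦ by
    by_contra! hcon
    exact hh (mem_of_forall_isPElement_mem_zpowers h hcon)
  obtain ⟨a, -, ha⟩ := exists_primary g hg
  obtain ⟨e, ⟨q, hq, heq, hec⟩, hmin⟩ := Set.exists_min_image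
    {a : G | ∃ q : ℕ, q.Prime ∧ IsPElement q a ∧ a ∉ center G}
    (fun a ↦ Nat.card (normalClosure {a})) (Set.toFinite _) ⟨a, ha⟩
  refine ⟨q, hq, e, heq, hec, fun M hM hMe ↦ or_iff_not_imp_right.2 fun hMc ↦ ?_⟩
  obtain ⟨h, hhM, hhc⟩ := SetLike.not_le_iff_exists.1 hMc
  obtain ⟨b, hbh, hb⟩ := exists_primary h hhc
  have hbM : normalClosure {b} ≤ M :=
    normalClosure_le_normal (Set.singleton_subset_iff.2 (zpowers_le.2 hhM hbh))
  rw [eq_of_le_of_card_ge (hbM.trans hMe) (hmin b hb)] at hbM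
  exact hbM (subset_normalClosure rfl)

lemma mem_centralizer_normalClosure_of_forall_commute {w z : G}
    (h : ∀ k : G, Commute (k * w * k⁻¹) z) :
    z ∈ centralizer (normalClosure {w} : Set G) := by
  have hle : normalClosure {w} ≤ centralizer {z} := (closure_le _).2 fun c hc ↦ by
    obtain ⟨_, rfl, hwc⟩ := Group.mem_conjugatesOfSet_iff.1 hc
    obtain ⟨k, rfl⟩ := isConj_iff.1 hwc
    exact mem_centralizer_singleton_iff_commute.2 (h k)
  exact mem_centralizer_iff.2 fun c hc ↦ mem_centralizer_singleton_iff.1 (hle hc)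

lemma centralizer_normalClosure_inf_le_center {e w : G}
    (hmin : ∀ M : Subgroup G, M.Normal → M ≤ normalClosure {e} → e ∈ M ∨ M ≤ center G)
    (hwe : ¬ Commute w e) :
    centralizer (normalClosure {w} : Set G) ⊓ normalClosure {e} ≤ center G :=
  (hmin _ inferInstance inf_le_right).resolve_left fun he ↦
    hwe (mem_centralizer_iff.1 he.1 w (subset_normalClosure rfl))

lemma commute_of_commute_mul {e z v w : G} (hv : ∀ k : G, Commute (k * v * k⁻¹) z)
    (hmin : ∀ M : Subgroup G, M.Normal → M ≤ normalClosure {e} → e ∈ M ∨ M ≤ center G)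
    (hve : ¬ Commute v e) (hw : Commute w (e * z)) (ho : (orderOf e).Coprime (orderOf w)) :
    Commute w e := by
  have hcomm : e⁻¹ * w * e⁻¹⁻¹ * w⁻¹ = z * (w * z⁻¹ * w⁻¹) := by
    calc e⁻¹ * w * e⁻¹⁻¹ * w⁻¹ = e⁻¹ * (w * (e * z)) * z⁻¹ * w⁻¹ := by group
      _ = z * (w * z⁻¹ * w⁻¹) := by rw [hw.eq]; group
  have hmem : e⁻¹ * w * e⁻¹⁻¹ * w⁻¹ ∈ center G := by
    refine centralizer_normalClosure_inf_le_center hmin hve ⟨?_, ?_⟩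
    · have hz := mem_centralizer_normalClosure_of_forall_commute hv
      rw [hcomm]
      exact mul_mem hz ((inferInstance : (centralizer _).Normal).conj_mem _ (inv_mem hz) w)
    · have he : e ∈ normalClosure {e} := subset_normalClosure rfl
      have hcomm' : e⁻¹ * w * e⁻¹⁻¹ * w⁻¹ = e⁻¹ * (w * e * w⁻¹) := by group
      have hmem := mul_mem (inv_mem he) (normalClosure_normal.conj_mem e he w)
      rwa [← hcomm'] at hmem
  exact (Commute.inv_left_iff.1 (commute_of_conj_mul_inv_mem_center hmem
    (by rwa [orderOf_inv]))).symm

end Minimal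

/-- Crossed class sizes `1, m, n, m * n` in which `m` is a power of the prime `p` and `n` a power of
the prime `r`, together with commuting elements of class sizes `m` and `n`. -/
structure HasCrossedPrimePowerClassSizes (G : Type*) [Group G] (m n p r : ℕ) : Prop extends
    HasCrossedClassSizes G m n where
  prime_left : p.Prime
  prime_right : r.Prime
  dvd_left : p ∣ m
  dvd_right : r ∣ n
  eq_of_dvd_left {s : ℕ} : s.Prime → s ∣ m → s = p
  eq_of_dvd_right {s : ℕ} : s.Prime → s ∣ n → s = r
  exists_commute : ∃ x z : G, IsPElement r x ∧ IsPElement p z ∧ classSize x = m ∧ classSize z = n ∧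
    Commute x z

namespace HasCrossedPrimePowerClassSizes

variable {G : Type*} [Group G] {m n p r : ℕ} {a b c e u v w x z : G}

lemma swap (hG : HasCrossedPrimePowerClassSizes G m n p r) :
    HasCrossedPrimePowerClassSizes G n m r p where
  toHasCrossedClassSizes := hG.toHasCrossedClassSizes.swap
  prime_left := hG.prime_right
  prime_right := hG.prime_left
  dvd_left := hG.dvd_right
  dvd_right := hG.dvd_left
  eq_of_dvd_left := hG.eq_of_dvd_right
  eq_of_dvd_right := hG.eq_of_dvd_left
  exists_commute := by
    obtain ⟨x, z, hxr, hzp, hx, hz, hxz⟩ := hG.exists_commute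
    exact ⟨z, x, hzp, hxr, hz, hx, hxz.symm⟩

lemma primes_ne (hG : HasCrossedPrimePowerClassSizes G m n p r) : p ≠ r :=
  hG.prime_ne hG.prime_left hG.dvd_left hG.dvd_right

lemma orderOf_coprime (hG : HasCrossedPrimePowerClassSizes G m n p r) (ha : IsPElement p a)
    (hb : IsPElement r b) : (orderOf a).Coprime (orderOf b) :=
  ha.orderOf_coprime_orderOf hG.prime_left hG.prime_right hG.primes_ne hb

lemma not_dvd_classSize (hG : HasCrossedPrimePowerClassSizes G m n p r) (hz : classSize z = n) :
    ¬ p ∣ classSize z :=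
  hz ▸ hG.not_dvd_right hG.prime_left hG.dvd_left

variable [Finite G]

lemma eq_left_or_eq_right_of_notMem_center (hG : HasCrossedPrimePowerClassSizes G m n p r) {s : ℕ}
    (hs : s.Prime) (ha : IsPElement s a) (hac : a ∉ center G) : s = p ∨ s = r :=
  (hG.dvd_mul_of_notMem_center hs ha hac).imp (hG.eq_of_dvd_left hs) (hG.eq_of_dvd_right hs)

lemma mem_center_of_coprime (hG : HasCrossedPrimePowerClassSizes G m n p r)
    (hpc : p.Coprime (orderOf c)) (hrc : r.Coprime (orderOf c)) : c ∈ center G := by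
  refine mem_of_forall_isPElement_mem_zpowers c fun a ha s hs hsa ↦ by_contra fun hac ↦ hac ?_
  have hsc : s.Coprime (orderOf c) := by
    rcases hG.eq_left_or_eq_right_of_notMem_center hs hsa hac with rfl | rfl <;> assumption
  have ha_one : orderOf a = 1 := Nat.Coprime.eq_one_of_dvd
    (hsa.orderOf_coprime hsc) (orderOf_dvd_of_mem_zpowers ha)
  exact orderOf_eq_one_iff.1 ha_one ▸ one_mem _

lemma exists_mul_mul_eq (hG : HasCrossedPrimePowerClassSizes G m n p r) (g : G) :
    ∃ a b c : G, IsPElement r a ∧ IsPElement p b ∧ c ∈ center G ∧ Commute a b ∧ a * b * c = g := by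
  obtain ⟨a, ha, d, hd, har, hdr, had, rfl⟩ := exists_isPElement_mul_eq hG.prime_right g
  obtain ⟨b, hb, c, hc, hbp, hcp, -, rfl⟩ := exists_isPElement_mul_eq hG.prime_left d
  refine ⟨a, b, c, har, hbp, hG.mem_center_of_coprime hcp
    (hdr.of_dvd_right (orderOf_dvd_of_mem_zpowers hc)), ?_, mul_assoc a b c⟩
  obtain ⟨i, hi⟩ := mem_zpowers_iff.1 hb
  exact hi ▸ had.zpow_right i

/- If `classSize b = m * n`, then the `r`-elements of `C(b)` lie in `C(z)` for a conjugate `z` of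
an element of class size `n`, and `x ∈ C(z)`. -/
lemma exists_conj_commute_of_forall_commute (hG : HasCrossedPrimePowerClassSizes G m n p r)
    (hxr : IsPElement r x) (hx : classSize x = m)
    (hall : ∀ z : G, IsPElement p z → classSize z = n → Commute x z) (ha : IsPElement r a)
    (hb : IsPElement p b) (hab : Commute a b) :
    ∃ k : G, Commute (k * x * k⁻¹) a ∧ Commute (k * x * k⁻¹) b := by
  have of_conj : (∀ k : G, Commute x (k * b * k⁻¹)) →
      ∃ k : G, Commute (k * x * k⁻¹) a ∧ Commute (k * x * k⁻¹) b := fun hxb ↦ by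
    obtain ⟨k, hk⟩ := exists_commute_conj_of_not_dvd_classSize hG.prime_right
      (hG.swap.not_dvd_classSize hx) ha
    exact ⟨k, hk.symm, commute_conj_left_iff.2 (by simpa only [inv_inv] using hxb k⁻¹)⟩
  by_cases hbc : b ∈ center G
  · exact of_conj fun k ↦ (mem_center_iff.1 (conj_mem_center_iff.2 hbc)) x
  rcases hG.classSize_eq_right_or_eq_mul hG.prime_left hG.dvd_left hb hbc with hbn | hbmn
  · exact of_conj fun k ↦ hall _ (hb.conj k) ((classSize_conj b k).trans hbn)
  obtain ⟨-, z₀, -, hz₀p, -, hz₀, -⟩ := hG.exists_commute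
  obtain ⟨l, hl⟩ := exists_commute_conj_of_not_dvd_classSize hG.prime_left
    (hG.not_dvd_classSize hz₀) hb
  have hz := (classSize_conj z₀ l).trans hz₀
  have hCb : ∀ t, Commute t b → IsPElement r t → centralizer {b} ≤ centralizer {t} := fun t htb ht ↦
    hG.centralizer_le_of_classSize_eq_mul hbmn htb.symm (hG.orderOf_coprime hb ht)
  obtain ⟨k, -, hk⟩ := exists_conj_mem_of_index_dvd_mul_index hG.prime_right
    (H := centralizer {b}) (K := centralizer {l * z₀ * l⁻¹}) (e := m)
    (fun t ht htr ↦ mem_centralizer_singleton_comm.1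
      (hCb t (mem_centralizer_singleton_iff_commute.1 ht) htr
        (mem_centralizer_singleton_iff_commute.2 hl.symm)))
    (hG.swap.not_dvd_right hG.prime_right hG.dvd_right)
    (by rw [← classSize, ← classSize, hbmn, hz]) hxr
    (mem_centralizer_singleton_iff_commute.2 (hall _ (hz₀p.conj l) hz))
  have hkb := mem_centralizer_singleton_iff_commute.1 hk
  exact ⟨k, (mem_centralizer_singleton_iff_commute.1 (hCb _ hkb (hxr.conj k)
    (mem_centralizer_singleton_iff_commute.2 hab))).symm, hkb⟩

lemma exists_not_commute (hG : HasCrossedPrimePowerClassSizes G m n p r)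
    (hxr : IsPElement r x) (hx : classSize x = m) :
    ∃ z : G, IsPElement p z ∧ classSize z = n ∧ ¬ Commute x z := by
  by_contra! hall
  refine hG.notMem_center_of_dvd hx.symm.dvd (centralizer_singleton_eq_top_iff.1 (top_le_iff.1
    (le_centralizer_of_forall_exists_conj_commute fun g _ ↦ ?_)))
  obtain ⟨a, b, c, ha, hb, hc, hab, rfl⟩ := hG.exists_mul_mul_eq g
  obtain ⟨k, hka, hkb⟩ := hG.exists_conj_commute_of_forall_commute hxr hx hall ha hb hab
  exact ⟨k, mem_top k, (hka.mul_right hkb).mul_right (mem_center_iff.1 hc _)⟩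

lemma classSize_eq_left_of_commute (hG : HasCrossedPrimePowerClassSizes G m n p r)
    (hup : IsPElement p u) (hu : classSize u = n) (hwr : IsPElement r w) (hwc : w ∉ center G)
    (huw : Commute u w) : classSize w = m := by
  refine (hG.swap.classSize_eq_right_or_eq_mul hG.prime_right hG.dvd_right hwr hwc).resolve_right
    fun hw ↦ ?_
  obtain ⟨x, -, hx, hux⟩ := hG.swap.exists_not_commute hup hu
  obtain ⟨k, hk⟩ := exists_commute_conj_of_not_dvd_classSize hG.prime_right
    (hG.swap.not_dvd_classSize hx) hwr
  have hle := hG.centralizer_le_of_classSize_eq_mul (hw.trans (mul_comm n m)) huw.symm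
    (hG.orderOf_coprime hup hwr).symm
  have hku := mem_centralizer_singleton_iff_commute.1
    (hle (mem_centralizer_singleton_iff_commute.2 hk.symm))
  have hxu := commute_conj_of_coprime_classSize
    (by rw [classSize_conj, hx, hu]; exact hG.coprime) hku k⁻¹
  exact hux (by simpa [mul_assoc] using hxu.symm)

lemma exists_commute_notMem_center_right (hG : HasCrossedPrimePowerClassSizes G m n p r) (g : G) :
    ∃ w : G, Commute w g ∧ IsPElement r w ∧ w ∉ center G := by
  obtain ⟨x, z, hxr, hzp, hx, hz, hxz⟩ := hG.exists_commute
  have hmul := centralizer_singleton_mul hxz (hG.orderOf_coprime hzp hxr).symm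
  have hxz_size : classSize (x * z) = m * n := hG.classSize_eq_mul_of_dvd_of_dvd
    (hx ▸ classSize_dvd_of_centralizer_le (hmul.trans_le inf_le_left))
    (hz ▸ classSize_dvd_of_centralizer_le (hmul.trans_le inf_le_right))
  exact exists_commute_isPElement_notMem_center hG.prime_right
    (hxz_size ▸ hG.classSize_dvd_mul g) ((Commute.refl x).mul_right hxz) hxr
    (hG.notMem_center_of_dvd hx.symm.dvd)

lemma classSize_ne_mul (hG : HasCrossedPrimePowerClassSizes G m n p r) (hvp : IsPElement p v) :
    classSize v ≠ m * n := by
  intro hv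
  obtain ⟨w, hwv, hwr, hwc⟩ := hG.exists_commute_notMem_center_right v
  have exists_conj : ∀ z : G, classSize z = n → ∃ k, Commute (k * z * k⁻¹) w := fun z hz ↦ by
    obtain ⟨k, hk⟩ := exists_commute_conj_of_not_dvd_classSize hG.prime_left
      (hG.not_dvd_classSize hz) hvp
    exact ⟨k, mem_centralizer_singleton_iff_commute.1
      (hG.centralizer_le_of_classSize_eq_mul hv hwv.symm (hG.orderOf_coprime hvp hwr)
        (mem_centralizer_singleton_iff_commute.2 hk.symm))⟩
  obtain ⟨-, z, -, hzp, -, hz, -⟩ := hG.exists_commute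
  obtain ⟨k, hk⟩ := exists_conj z hz
  have hw : classSize w = m := hG.classSize_eq_left_of_commute (hzp.conj k)
    ((classSize_conj z k).trans hz) hwr hwc hk
  obtain ⟨z', -, hz', hwz'⟩ := hG.exists_not_commute hwr hw
  obtain ⟨l, hl⟩ := exists_conj z' hz'
  have hzw := commute_conj_of_coprime_classSize
    (by rw [classSize_conj, hz', hw]; exact hG.coprime.symm) hl l⁻¹
  exact hwz' (by simpa [mul_assoc] using hzw.symm)

lemma classSize_eq_right (hG : HasCrossedPrimePowerClassSizes G m n p r) (hvp : IsPElement p v)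
    (hvc : v ∉ center G) : classSize v = n :=
  (hG.classSize_eq_right_or_eq_mul hG.prime_left hG.dvd_left hvp hvc).resolve_right
    (hG.classSize_ne_mul hvp)

lemma commute_conj (hG : HasCrossedPrimePowerClassSizes G m n p r) (ha : IsPElement p a)
    (hb : IsPElement r b) (hab : Commute a b) (k : G) : Commute (k * a * k⁻¹) b := by
  by_cases hac : a ∈ center G
  · exact (mem_center_iff.1 (conj_mem_center_iff.2 hac) b).symm
  by_cases hbc : b ∈ center G
  · exact mem_center_iff.1 hbc _
  refine commute_conj_of_coprime_classSize ?_ hab k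
  rw [hG.classSize_eq_right ha hac, hG.swap.classSize_eq_right hb hbc]
  exact hG.coprime.symm

lemma pElementCentralizer_subset_symm (hG : HasCrossedPrimePowerClassSizes G m n p r)
    (ha : IsPElement p a) (hb : IsPElement p b) (hac : a ∉ center G) (hbc : b ∉ center G)
    (hab : pElementCentralizer r a ⊆ pElementCentralizer r b) :
    pElementCentralizer r b ⊆ pElementCentralizer r a := by
  rintro w ⟨hwr, hwb⟩
  obtain ⟨k, -, hk⟩ := exists_conj_mem_of_index_dvd_mul_index hG.prime_right
    (H := centralizer {a}) (K := centralizer {b}) (e := 1)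
    (fun t ht htr ↦ mem_centralizer_singleton_iff_commute.2
      (hab ⟨htr, mem_centralizer_singleton_iff_commute.1 ht⟩).2)
    hG.prime_right.not_dvd_one
    (by rw [← classSize, ← classSize, hG.classSize_eq_right ha hac, hG.classSize_eq_right hb hbc,
      one_mul]) hwr (mem_centralizer_singleton_iff_commute.2 hwb)
  have hwa := hG.swap.commute_conj (hwr.conj k) ha (mem_centralizer_singleton_iff_commute.1 hk) k⁻¹
  exact ⟨hwr, by simpa [mul_assoc] using hwa⟩

lemma pElementCentralizer_subset_of_commute (hG : HasCrossedPrimePowerClassSizes G m n p r)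
    (he : IsPElement p e) (hec : e ∉ center G)
    (hmin : ∀ M : Subgroup G, M.Normal → M ≤ normalClosure {e} → e ∈ M ∨ M ≤ center G)
    (hz : IsPElement p z) (hzc : z ∉ center G) (hez : Commute e z) :
    pElementCentralizer r e ⊆ pElementCentralizer r z := by
  by_contra hez_not
  obtain ⟨w, ⟨hwr, hwz⟩, hwe⟩ := Set.not_subset.1
    (mt (hG.pElementCentralizer_subset_symm hz he hzc hec) hez_not)
  have commute_e : ∀ t ∈ pElementCentralizer r (e * z), Commute t e := fun t ⟨htr, ht⟩ ↦
    commute_of_commute_mul (fun k ↦ hG.swap.commute_conj hwr hz hwz k) hmin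
      (fun h ↦ hwe ⟨hwr, h⟩) ht (hG.orderOf_coprime he htr)
  have hezc : e * z ∉ center G := fun h ↦ hwe ⟨hwr, commute_e w ⟨hwr, mem_center_iff.1 h w⟩⟩
  refine hez_not fun t ht ↦ ⟨ht.1, ?_⟩
  have htez := (hG.pElementCentralizer_subset_symm (he.mul hG.prime_left hz hez) he hezc hec
    (fun t ht ↦ ⟨ht.1, commute_e t ht⟩) ht).2
  simpa using ht.2.inv_right.mul_right htez

lemma not_isPElement_left (hG : HasCrossedPrimePowerClassSizes G m n p r) (hec : e ∉ center G)
    (hmin : ∀ M : Subgroup G, M.Normal → M ≤ normalClosure {e} → e ∈ M ∨ M ≤ center G) :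
    ¬ IsPElement p e := by
  intro he
  obtain ⟨x, hxe, hxr, hxc⟩ := hG.exists_commute_notMem_center_right e
  obtain ⟨z, hzp, hz, hxz⟩ := hG.exists_not_commute hxr (hG.swap.classSize_eq_right hxr hxc)
  obtain ⟨k, hk⟩ := exists_commute_conj_of_not_dvd_classSize hG.prime_left
    (hG.not_dvd_classSize hz) he
  have hzc : k * z * k⁻¹ ∉ center G := fun h ↦
    hG.swap.notMem_center_of_dvd hz.symm.dvd (conj_mem_center_iff.1 h)
  have hxz' := hG.commute_conj (hzp.conj k) hxr
    (hG.pElementCentralizer_subset_of_commute he hec hmin (hzp.conj k) hzc hk ⟨hxr, hxe⟩).2.symm k⁻¹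
  exact hxz (by simpa [mul_assoc] using hxz'.symm)

lemma elim (hG : HasCrossedPrimePowerClassSizes G m n p r) : False := by
  obtain ⟨g, hg⟩ := hG.exists_classSize_eq_left
  obtain ⟨q, hq, e, heq, hec, hmin⟩ := exists_isPElement_forall_normal_mem_or_le_center
    (hG.notMem_center_of_dvd hg.symm.dvd)
  rcases hG.eq_left_or_eq_right_of_notMem_center hq heq hec with rfl | rfl
  · exact hG.not_isPElement_left hec hmin heq
  · exact hG.swap.not_isPElement_left hec hmin heq

end HasCrossedPrimePowerClassSizes

lemma HasCrossedClassSizes.elim {G : Type*} [Group G] [Finite G] {m n : ℕ}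
    (hG : HasCrossedClassSizes G m n) : False := by
  obtain ⟨p, r, hp, hpm, hr, hrn, x, z, hxr, hzp, hx, hz, hxz⟩ := hG.exists_commute_classSize_eq
  refine HasCrossedPrimePowerClassSizes.elim (p := p) (r := r)
    { toHasCrossedClassSizes := hG
      prime_left := hp
      prime_right := hr
      dvd_left := hpm
      dvd_right := hrn
      eq_of_dvd_left := fun hs hsm ↦ ?_
      eq_of_dvd_right := fun hs hsn ↦ ?_
      exists_commute := ⟨x, z, hxr, hzp, hx, hz, hxz⟩ }
  · exact hG.swap.prime_eq_of_dvd_right hr hrn hp hpm hs hsm hzp hxr hz hx hxz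
  · exact hG.prime_eq_of_dvd_right hp hpm hr hrn hs hsn hxr hzp hx hz hxz.symm

/-! ### Nilpotency -/

lemma relIndex_eq_of_forall_exists_inv_mul_mem {G : Type*} [Group G] {H K L : Subgroup G}
    (hKL : K ≤ L) (h : ∀ c ∈ L, ∃ k ∈ K, k⁻¹ * c ∈ H) : H.relIndex K = H.relIndex L := by
  refine Nat.card_congr (Equiv.ofBijective (quotientSubgroupOfEmbeddingOfLE H hKL)
    ⟨(quotientSubgroupOfEmbeddingOfLE H hKL).injective, fun a ↦ ?_⟩)
  induction a using QuotientGroup.induction_on with | H c =>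
  obtain ⟨k, hk, hkc⟩ := h c c.2
  refine ⟨((⟨k, hk⟩ : K) : K ⧸ H.subgroupOf K), ?_⟩
  rwa [quotientSubgroupOfEmbeddingOfLE_apply_mk, QuotientGroup.eq, mem_subgroupOf]

lemma centralizer_pElementCentralizer_le {G : Type*} [Group G] {p : ℕ} {x : G}
    (hx : IsPElement p x) : centralizer (pElementCentralizer p x) ≤ centralizer {x} :=
  centralizer_le (Set.singleton_subset_iff.2 ⟨hx, Commute.refl x⟩)

namespace HasFourClassSizes

variable {G : Type*} [Group G] [Finite G] {m n p q : ℕ} {b x y : G}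

lemma exists_isPElement_commute_classSize_eq_right (hG : HasFourClassSizes G m n) (hp : p.Prime)
    (hpm : p ∣ m) (hxp : IsPElement p x) (hx : classSize x = m) :
    ∃ q, q.Prime ∧ q ∣ n ∧ ∃ y, IsPElement q y ∧ classSize y = n ∧ Commute x y := by
  obtain ⟨q, hq, y, hyq, hy⟩ := hG.swap.exists_isPElement_classSize_eq
  obtain ⟨k, hk⟩ := exists_commute_conj_of_not_dvd_classSize hp
    (hy ▸ hG.not_dvd_right hp hpm) hxp
  have hqm : ¬ q ∣ m := fun h ↦ hG.classSize_ne_right hp hpm hq h hxp hx hyq hy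
  exact ⟨q, hq, (hG.dvd_mul_of_notMem_center hq hyq
    (hG.swap.notMem_center_of_dvd hy.symm.dvd)).resolve_left hqm,
    k * y * k⁻¹, hyq.conj k, (classSize_conj y k).trans hy, hk⟩

lemma exists_isPElement_commute_classSize_eq (hG : HasFourClassSizes G m n) :
    ∃ p q, p.Prime ∧ p ∣ m ∧ q.Prime ∧ q ∣ n ∧ ∃ x y : G, IsPElement p x ∧ IsPElement q y ∧
      classSize x = m ∧ classSize y = n ∧ Commute x y := by
  by_contra! hcon
  refine HasCrossedClassSizes.elim (G := G) (m := m) (n := n)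
    { toHasFourClassSizes := hG
      classSize_ne_left := fun {r x} hr hrm hxr hx ↦ ?_
      classSize_ne_right := fun {r y} hr hrn hyr hy ↦ ?_ }
  · obtain ⟨q, hq, hqn, y, hyq, hy, hxy⟩ :=
      hG.exists_isPElement_commute_classSize_eq_right hr hrm hxr hx
    exact hcon r q hr hrm hq hqn x y hxr hyq hx hy hxy
  · obtain ⟨p, hp, hpm, x, hxp, hx, hyx⟩ :=
      hG.swap.exists_isPElement_commute_classSize_eq_right hr hrn hyr hy
    exact hcon p r hp hpm hr hrn x y hxp hyr hx hy hyx.symm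

lemma mem_centralizer_pElementCentralizer (hG : HasFourClassSizes G m n) (hp : p.Prime)
    (hpm : p ∣ m) (hxp : IsPElement p x) (hx : classSize x = m) (hbx : Commute b x)
    (hb : p.Coprime (orderOf b)) : b ∈ centralizer (pElementCentralizer p x) :=
  mem_centralizer_iff.2 fun _ ht ↦
    hG.commute_of_commute_of_classSize_eq hp hpm hxp hx ht.2 hbx ht.1 hb

lemma relIndex_centralizer_pElementCentralizer (hG : HasFourClassSizes G m n) (hp : p.Prime)
    (hpm : p ∣ m) (hxp : IsPElement p x) (hx : classSize x = m) (hbx : Commute b x)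
    (hb : p.Coprime (orderOf b)) :
    (centralizer {b}).relIndex (centralizer (pElementCentralizer p x)) =
      (centralizer {b}).relIndex (centralizer {x}) := by
  refine relIndex_eq_of_forall_exists_inv_mul_mem (centralizer_pElementCentralizer_le hxp)
    fun c hc ↦ ?_
  obtain ⟨u, hu, w, hw, hup, hwp, huw, rfl⟩ := exists_isPElement_mul_eq hp c
  have hux := mem_centralizer_singleton_iff_commute.1 (zpowers_le.2 hc hu)
  have hwx := mem_centralizer_singleton_iff_commute.1 (zpowers_le.2 hc hw)
  refine ⟨w, hG.mem_centralizer_pElementCentralizer hp hpm hxp hx hwx hwp, ?_⟩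
  rw [huw.eq, inv_mul_cancel_left]
  exact mem_centralizer_singleton_iff_commute.2
    (hG.commute_of_commute_of_classSize_eq hp hpm hxp hx hux hbx hup hb)

lemma relIndex_centralizer_pElementCentralizer_eq (hG : HasFourClassSizes G m n) (hp : p.Prime)
    (hpm : p ∣ m) (hxp : IsPElement p x) (hx : classSize x = m) {h : G}
    (hh : h ∈ centralizer (pElementCentralizer p x)) :
    (centralizer {h}).relIndex (centralizer (pElementCentralizer p x)) = 1 ∨
      (centralizer {h}).relIndex (centralizer (pElementCentralizer p x)) = n := by
  have hKx := centralizer_pElementCentralizer_le hxp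
  obtain ⟨a, ha, b, hb, hap, hbp, hab, rfl⟩ := exists_isPElement_mul_eq hp h
  have hax := mem_centralizer_singleton_iff_commute.1 (hKx (zpowers_le.2 hh ha))
  have hbx := mem_centralizer_singleton_iff_commute.1 (hKx (zpowers_le.2 hh hb))
  have hKa : centralizer (pElementCentralizer p x) ≤ centralizer {a} :=
    centralizer_le (Set.singleton_subset_iff.2 ⟨hap, hax⟩)
  rw [centralizer_singleton_mul hab (hap.orderOf_coprime hbp), ← inf_relIndex_right, inf_right_comm,
    inf_eq_right.2 hKa, inf_relIndex_left,
    hG.relIndex_centralizer_pElementCentralizer hp hpm hxp hx hbx hbp]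
  exact hG.relIndex_centralizer_eq hx hbx.symm (hxp.orderOf_coprime hbp)

lemma hasUniformClassSize_centralizer (hG : HasFourClassSizes G m n) (hp : p.Prime)
    (hpm : p ∣ m) (hxp : IsPElement p x) (hx : classSize x = m) :
    HasUniformClassSize (centralizer (pElementCentralizer p x)) n := by
  intro h hh
  rw [classSize_subgroup_coe]
  refine (hG.relIndex_centralizer_pElementCentralizer_eq hp hpm hxp hx h.2).resolve_left fun h1 ↦ ?_
  rw [← classSize_subgroup_coe, classSize_eq_one_iff] at h1
  exact hh h1

lemma exists_right_eq_pow (hG : HasFourClassSizes G m n) (hp : p.Prime) (hpm : p ∣ m)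
    (hq : q.Prime) (hqn : q ∣ n) (hxp : IsPElement p x) (hyq : IsPElement q y)
    (hx : classSize x = m) (hy : classSize y = n) (hxy : Commute x y) : ∃ b : ℕ, n = q ^ b := by
  have hyp := hyq.coprime_orderOf hp hq (hG.prime_ne hp hpm hqn)
  have hyK := hG.mem_centralizer_pElementCentralizer hp hpm hxp hx hxy.symm hyp
  have hyc : (⟨y, hyK⟩ : centralizer (pElementCentralizer p x)) ∉ center _ := by
    rw [← classSize_eq_one_iff, classSize_subgroup_coe,
      hG.relIndex_centralizer_pElementCentralizer hp hpm hxp hx hxy.symm hyp, relIndex_eq_one]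
    intro hle
    have hdvd := classSize_dvd_of_centralizer_le hle
    rw [hx, hy] at hdvd
    exact hG.swap.left_not_dvd_right hdvd
  obtain ⟨r, k, hr, -, rfl⟩ :=
    (hG.hasUniformClassSize_centralizer hp hpm hxp hx).isPrimePow hyc
  exact ⟨k, by rw [(Nat.prime_dvd_prime_iff_eq hq hr.nat_prime).1 (hq.dvd_of_dvd_pow hqn)]⟩

end HasFourClassSizes

section NormalClosure

variable {G : Type*} [Group G] [Finite G] {q : ℕ} {u y : G}

lemma normalClosure_le_of_coprime_index {S : Subgroup G} (hy : y ∈ S)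
    (hc : (classSize y).Coprime S.index) : normalClosure {y} ≤ S := by
  rw [normalClosure, closure_le]
  intro w hw
  obtain ⟨a, ha, hw⟩ := Group.mem_conjugatesOfSet_iff.1 hw
  obtain ⟨g, rfl⟩ := isConj_iff.1 hw
  rw [Set.mem_singleton_iff.1 ha]
  obtain ⟨s, hs, c, hcy, rfl⟩ := exists_eq_mul_of_coprime_index (H := centralizer {y}) hc g
  have hconj : s * c * y * (s * c)⁻¹ = s * (c * y * c⁻¹) * s⁻¹ := by group
  rw [hconj, conj_eq_self_iff_commute.2 (mem_centralizer_singleton_iff_commute.1 hcy)]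
  exact mul_mem (mul_mem hs hy) (inv_mem hs)

lemma isPGroup_normalClosure [Fact q.Prime] (hy : IsPElement q y)
    (hyc : ∃ b, classSize y = q ^ b) : IsPGroup q (normalClosure {y}) := by
  obtain ⟨S, hS⟩ := (hy.isPGroup_zpowers Fact.out).exists_le_sylow
  obtain ⟨b, hb⟩ := hyc
  refine S.isPGroup'.to_le (normalClosure_le_of_coprime_index (hS (mem_zpowers y)) ?_)
  rw [hb]
  exact ((Nat.Prime.coprime_iff_not_dvd Fact.out).2 S.not_dvd_index).pow_left b

/- If not, some `v` in the normalizer of `C_V(u) < V` does not commute with `u`, where `V` is the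
normal closure of `y`; then `y` commutes with `u * v * u⁻¹ * v⁻¹`. -/
lemma normalClosure_le_centralizer_of_forall_commute [Fact q.Prime]
    (hV : IsPGroup q (normalClosure {y})) (huy : Commute u y) (hu : q.Coprime (orderOf u))
    (h : ∀ d ∈ normalClosure {y}, Commute d y → Commute d u) :
    normalClosure {y} ≤ centralizer {u} := by
  by_contra hcon
  have hy : y ∈ normalClosure {y} := subset_normalClosure rfl
  have hnil : Group.IsNilpotent (normalClosure {y}) := hV.isNilpotent
  obtain ⟨⟨v, hv⟩, hvN, hvu⟩ := SetLike.exists_of_lt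
    (Group.normalizerCondition_of_isNilpotent _ (lt_top_iff_ne_top.2 (mt subgroupOf_eq_top.1 hcon)))
  rw [mem_subgroupOf, mem_centralizer_singleton_comm, mem_centralizer_singleton_iff_commute] at hvu
  have hvy : Commute (v⁻¹ * y * v) u := mem_centralizer_singleton_iff_commute.1
    ((mem_normalizer_iff''.1 hvN ⟨y, hy⟩).1 (mem_centralizer_singleton_iff_commute.2 huy.symm))
  have hdV : u * v * u⁻¹ * v⁻¹ ∈ normalClosure {y} :=
    mul_mem (normalClosure_normal.conj_mem v hv u) (inv_mem hv)
  have hdy : Commute (u * v * u⁻¹ * v⁻¹) y := by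
    simpa only [mul_assoc] using huy.mul_left (commute_conj_left_iff.2 hvy.inv_right.symm)
  have hdq := (isPGroup_iff_forall_mem_isPElement Fact.out).1 hV _ hdV
  have hd := eq_one_of_conj_eq_mul (h _ hdV hdy) (b := v) (by group) (hdq.orderOf_coprime hu)
  exact hvu (conj_eq_self_iff_commute.1 (mul_inv_eq_one.1 hd))

end NormalClosure

namespace HasFourClassSizes

variable {G : Type*} [Group G] [Finite G] {m n p q r : ℕ} {g u y : G}

lemma mem_center_of_ne (hG : HasFourClassSizes G m n) (hp : p.Prime) (hq : q.Prime)
    (hm : ∃ a, m = p ^ a) (hn : ∃ b, n = q ^ b) (hr : r.Prime) (hrp : r ≠ p) (hrq : r ≠ q)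
    (hu : IsPElement r u) : u ∈ center G := by
  by_contra huc
  obtain ⟨a, rfl⟩ := hm
  obtain ⟨b, rfl⟩ := hn
  exact (hG.dvd_mul_of_notMem_center hr hu huc).elim
    (fun h ↦ hrp ((Nat.prime_dvd_prime_iff_eq hr hp).1 (hr.dvd_of_dvd_pow h)))
    fun h ↦ hrq ((Nat.prime_dvd_prime_iff_eq hr hq).1 (hr.dvd_of_dvd_pow h))

lemma commute_of_classSize_eq_pow (hG : HasFourClassSizes G m n) (hp : p.Prime) (hpm : p ∣ m)
    (hq : q.Prime) (hqn : q ∣ n) (hn : ∃ b, n = q ^ b) (hyq : IsPElement q y)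
    (hy : classSize y = n) (hu : IsPElement p u) : Commute u y := by
  have := Fact.mk hq
  have hqp := (hG.prime_ne hp hpm hqn).symm
  have hV := isPGroup_normalClosure hyq (hy ▸ hn)
  obtain ⟨k, hk⟩ := exists_commute_conj_of_not_dvd_classSize hp
    (hy ▸ hG.not_dvd_right hp hpm) hu
  have huk : Commute (k⁻¹ * u * k) y := (commute_conj_left_iff.1 hk.symm).symm
  have hup : IsPElement p (k⁻¹ * u * k) := by simpa using hu.conj k⁻¹
  have huq := hup.coprime_orderOf hq hp hqp
  have hle := normalClosure_le_centralizer_of_forall_commute hV huk huq fun d hd hdy ↦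
    hG.swap.commute_of_commute_of_classSize_eq hq hqn hyq hy hdy huk
      ((isPGroup_iff_forall_mem_isPElement hq).1 hV d hd) huq
  have hyV : y ∈ normalClosure {y} := subset_normalClosure rfl
  have hyk := mem_centralizer_singleton_iff_commute.1
    (hle (normalClosure_normal.conj_mem y hyV k⁻¹))
  simpa [mul_assoc] using (commute_conj_left_iff.1 hyk).symm

lemma commute_of_commute_of_coprime (hG : HasFourClassSizes G m n) (hp : p.Prime) (hpm : p ∣ m)
    (hq : q.Prime) (hqn : q ∣ n) (hm : ∃ a, m = p ^ a) (hn : ∃ b, n = q ^ b)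
    (hyq : IsPElement q y) (hy : classSize y = n) (huy : Commute u y) (hu : IsPElement p u)
    (hgy : Commute g y) (hg : p.Coprime (orderOf g)) : Commute u g := by
  rw [Commute.symm_iff, ← mem_centralizer_singleton_iff_commute]
  refine mem_of_forall_isPElement_mem_zpowers g fun c hc r hr hcr ↦ ?_
  obtain rfl | hrq := eq_or_ne r q
  · have hcy := zpowers_le.2 (mem_centralizer_singleton_iff_commute.2 hgy) hc
    exact mem_centralizer_singleton_iff_commute.2
      (hG.swap.commute_of_commute_of_classSize_eq hr hqn hyq hy
        (mem_centralizer_singleton_iff_commute.1 hcy) huy hcr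
        (hu.coprime_orderOf hr hp (hG.prime_ne hp hpm hqn).symm))
  obtain rfl | hrp := eq_or_ne r p
  · have hc1 := hcr.orderOf_coprime (hg.coprime_dvd_right (orderOf_dvd_of_mem_zpowers hc))
    rw [Nat.coprime_self, orderOf_eq_one_iff] at hc1
    exact hc1 ▸ one_mem _
  · exact center_le_centralizer _ (hG.mem_center_of_ne hp hq hm hn hr hrp hrq hcr)

lemma isPElement_mul (hG : HasFourClassSizes G m n) (hp : p.Prime) (hpm : p ∣ m)
    (hq : q.Prime) (hqn : q ∣ n) (hm : ∃ a, m = p ^ a) (hn : ∃ b, n = q ^ b)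
    (hyq : IsPElement q y) (hy : classSize y = n) {u v : G} (hu : IsPElement p u)
    (hv : IsPElement p v) : IsPElement p (u * v) := by
  have hmem {t : G} (ht : IsPElement p t) : t ∈ centralizer {y} :=
    mem_centralizer_singleton_iff_commute.2
      (hG.commute_of_classSize_eq_pow hp hpm hq hqn hn hyq hy ht)
  let L := centralizer {y}
  suffices h : IsPElement p ((⟨u, hmem hu⟩ : L) * ⟨v, hmem hv⟩) from
    isPElement_subgroup_coe_iff.2 h
  refine isPElement_mul_of_not_dvd_classSize hp (fun g hg hd ↦ ?_)
    (isPElement_subgroup_coe_iff.1 hu) (isPElement_subgroup_coe_iff.1 hv)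
  rw [classSize_subgroup_coe] at hd
  obtain ⟨S, hSL, hS, hSi⟩ := exists_isPGroup_not_dvd_relIndex hp L
  refine hSi (hd.trans (relIndex_dvd_of_le_left _ fun t ht ↦ ?_))
  have hty := mem_centralizer_singleton_iff_commute.1 (hSL ht)
  have htp := (isPGroup_iff_forall_mem_isPElement hp).1 hS t ht
  exact mem_centralizer_singleton_iff_commute.2
    (hG.commute_of_commute_of_coprime hp hpm hq hqn hm hn hyq hy hty htp
      (mem_centralizer_singleton_iff_commute.1 g.2) (by rwa [Subgroup.orderOf_coe]))

end HasFourClassSizes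

lemma isNilpotent_of_forall_isPElement_mul {G : Type*} [Group G] [Finite G]
    (h : ∀ r : ℕ, r.Prime → ∀ u v : G, IsPElement r u → IsPElement r v → IsPElement r (u * v)) :
    Group.IsNilpotent G := by
  refine ((Group.isNilpotent_of_finite_tfae (G := G)).out 0 3).2 fun r hr S ↦ ?_
  let P : Subgroup G :=
    { carrier := {t | IsPElement r t}
      mul_mem' := fun {u v} hu hv ↦ h r hr.out u v hu hv
      one_mem' := ⟨0, by simp⟩
      inv_mem' := fun hu ↦ hu.inv }
  have hP : IsPGroup r P := (isPGroup_iff_forall_mem_isPElement hr.out).2 fun _ ↦ id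
  have hSP : (S : Subgroup G) ≤ P := (isPGroup_iff_forall_mem_isPElement hr.out).1 S.isPGroup'
  rw [← S.is_maximal' hP hSP]
  exact ⟨fun _ ht k ↦ ht.conj k⟩

/-- Beltrán–Felipe: if `N(G) = {1, m, n, mn}` with `m, n` coprime and greater than `1`,
then `G` is nilpotent and `m` and `n` are powers of two distinct primes. -/
theorem beltran_felipe {G : Type*} [Group G] [Finite G] (m n : ℕ)
    (hm : 1 < m) (hn : 1 < n) (hmn : Nat.Coprime m n)
    (hN : {k : ℕ | ∃ x : G, classSize x = k} = {1, m, n, m * n}) :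
    Group.IsNilpotent G ∧
      ∃ p q : ℕ, p.Prime ∧ q.Prime ∧ p ≠ q ∧ (∃ a : ℕ, m = p ^ a) ∧ ∃ b : ℕ, n = q ^ b := by
  have hG : HasFourClassSizes G m n := ⟨hm, hn, hmn, hN⟩
  obtain ⟨p, q, hp, hpm, hq, hqn, x, y, hxp, hyq, hx, hy, hxy⟩ :=
    hG.exists_isPElement_commute_classSize_eq
  have hmp := hG.swap.exists_right_eq_pow hq hqn hp hpm hyq hxp hy hx hxy.symm
  have hnq := hG.exists_right_eq_pow hp hpm hq hqn hxp hyq hx hy hxy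
  refine ⟨isNilpotent_of_forall_isPElement_mul fun r hr u v hu hv ↦ ?_,
    p, q, hp, hq, hG.prime_ne hp hpm hqn, hmp, hnq⟩
  obtain rfl | hrp := eq_or_ne r p
  · exact hG.isPElement_mul hp hpm hq hqn hmp hnq hyq hy hu hv
  obtain rfl | hrq := eq_or_ne r q
  · exact hG.swap.isPElement_mul hq hqn hp hpm hnq hmp hxp hx hu hv
  · exact hu.mul hr hv (mem_center_iff.1 (hG.mem_center_of_ne hp hq hmp hnq hr hrp hrq hv) u)
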